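/- arXiv:1105.4489 — 9 statements merged into one kernel-verified Lean document; each statement's English description precedes it below -/
import Mathlib

section
/- Let μ be a nilpotent Lie algebra law on ℝ^n, let d_1 < d_2 < ... < d_r be positive integers with no common divisor, and let n_1, ..., n_r be positive integers with n_1 + ... + n_r = n. Write D = diag(d_1, ..., d_1, d_2, ..., d_2, ..., d_r, ..., d_r) (each d_i repeated n_i times). Then the following are equivalent: (i) there exists μ₀ ∈ GL_n(ℝ)·μ with m(μ₀) = c I + φ for some c < 0 and some symmetric derivation φ of μ₀ whose distinct eigenvalues, after rescaling φ by a positive constant so that they become coprime positive integers, are d_1 < ... < d_r with multiplicities n_1, ..., n_r (i.e., μ is an Einstein nilradical of eigenvalue type (d_1 < ... < d_r; n_1, ..., n_r)); (ii) there exists μ̃ ∈ GL_n(ℝ)·μ such that D is a derivation of μ̃ and m(μ̃) = (Σ n_i d_i)/(n Σ n_i d_i² − (Σ n_i d_i)²) · ( −((Σ n_i d_i²)/(Σ n_i d_i)) I + D ). -/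
open Matrix BigOperators Polynomial

noncomputable section

abbrev Law (n : ℕ) := (Fin n → ℝ) → (Fin n → ℝ) → (Fin n → ℝ)

/-- `i`-th canonical basis vector of `ℝ^n`. -/
def bVec {n : ℕ} (i : Fin n) : Fin n → ℝ := Pi.single i 1

def IsBilin {n : ℕ} (μ : Law n) : Prop :=
  (∀ X, IsLinearMap ℝ (μ X)) ∧ (∀ Y, IsLinearMap ℝ (fun X => μ X Y))

def IsSkew {n : ℕ} (μ : Law n) : Prop := ∀ X Y, μ X Y = - μ Y X

def IsJacobi {n : ℕ} (μ : Law n) : Prop :=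
  ∀ X Y Z, μ (μ X Y) Z + μ (μ Y Z) X + μ (μ Z X) Y = 0

def IsLieLaw {n : ℕ} (μ : Law n) : Prop := IsBilin μ ∧ IsSkew μ ∧ IsJacobi μ

/-- lower central series of the law `μ`. -/
def lcs {n : ℕ} (μ : Law n) : ℕ → Submodule ℝ (Fin n → ℝ)
  | 0 => ⊤
  | k + 1 => Submodule.span ℝ {z | ∃ x y, y ∈ lcs μ k ∧ z = μ x y}

def IsNilpotentLaw {n : ℕ} (μ : Law n) : Prop :=
  IsLieLaw μ ∧ ∃ k, lcs μ k = ⊥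

/-- the action of `GL_n(ℝ)` on laws: `(g·μ)(X,Y) = g μ(g⁻¹X, g⁻¹Y)`. -/
def act {n : ℕ} (g : GL (Fin n) ℝ) (μ : Law n) : Law n :=
  fun X Y =>
    (g : Matrix (Fin n) (Fin n) ℝ).mulVec
      (μ (((g⁻¹ : GL (Fin n) ℝ) : Matrix (Fin n) (Fin n) ℝ).mulVec X)
         (((g⁻¹ : GL (Fin n) ℝ) : Matrix (Fin n) (Fin n) ℝ).mulVec Y))

def IsDerivation {n : ℕ} (μ : Law n) (ψ : Matrix (Fin n) (Fin n) ℝ) : Prop :=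
  ∀ X Y, ψ.mulVec (μ X Y) = μ (ψ.mulVec X) Y + μ X (ψ.mulVec Y)

/-- the unnormalized moment map `m(μ) = 4 Ric_μ`, as a matrix in the canonical basis. -/
def momentMap {n : ℕ} (μ : Law n) : Matrix (Fin n) (Fin n) ℝ :=
  Matrix.of fun k l =>
    4 * (-(1/2) * ∑ i, ∑ j, μ (bVec k) (bVec i) j * μ (bVec l) (bVec i) j
      + (1/4) * ∑ i, ∑ j, μ (bVec i) (bVec j) k * μ (bVec i) (bVec j) l)

def IsEinsteinNilradical {n : ℕ} (μ : Law n) : Prop :=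
  ∃ g : GL (Fin n) ℝ, ∃ c : ℝ, ∃ φ : Matrix (Fin n) (Fin n) ℝ,
    c < 0 ∧ φ.IsSymm ∧ IsDerivation (act g μ) φ ∧
    momentMap (act g μ) = c • (1 : Matrix (Fin n) (Fin n) ℝ) + φ

/-- build a (bilinear) law from a table `c` of structure constants on the
canonical basis, antisymmetrized: `[e_i, e_j] = c i j - c j i`. -/
def mkLaw {n : ℕ} (c : Fin n → Fin n → Fin n → ℝ) : Law n :=
  fun X Y k => ∑ i, ∑ j, X i * Y j * (c i j k - c j i k)

theorem aux_diag {n : ℕ} (A B : Matrix (Fin n) (Fin n) ℝ) (hA : A.IsSymm) (hB : B.IsSymm)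
    (h : A.charpoly = B.charpoly) :
    ∃ K : Matrix (Fin n) (Fin n) ℝ, K * Kᵀ = 1 ∧ Kᵀ * K = 1 ∧ K * A * Kᵀ = B := by
  have hA' : A.IsHermitian := by
    ext i j; simpa using congrFun (congrFun hA i) j
  have hB' : B.IsHermitian := by
    ext i j; simpa using congrFun (congrFun hB i) j
  have he : hA'.eigenvalues = hB'.eigenvalues :=
    (Matrix.IsHermitian.eigenvalues_eq_eigenvalues_iff hA' hB').2 h
  have h1 := hA'.conjStarAlgAut_star_eigenvectorUnitary
  have h2 := hB'.spectral_theorem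
  rw [← he, ← h1] at h2
  simp only [Unitary.conjStarAlgAut_apply, Unitary.coe_star, star_star] at h2
  obtain ⟨U, hU⟩ : ∃ U : Matrix (Fin n) (Fin n) ℝ, U = hA'.eigenvectorUnitary := ⟨_, rfl⟩
  obtain ⟨V, hV⟩ : ∃ V : Matrix (Fin n) (Fin n) ℝ, V = hB'.eigenvectorUnitary := ⟨_, rfl⟩
  have hs : ∀ M : Matrix (Fin n) (Fin n) ℝ, star M = Mᵀ := by
    intro M; ext i j; simp [Matrix.star_apply]
  have u1 : Uᵀ * U = 1 := by rw [← hs, hU]; exact Unitary.coe_star_mul_self _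
  have u2 : U * Uᵀ = 1 := by rw [← hs, hU]; exact Unitary.coe_mul_star_self _
  have v1 : Vᵀ * V = 1 := by rw [← hs, hV]; exact Unitary.coe_star_mul_self _
  have v2 : V * Vᵀ = 1 := by rw [← hs, hV]; exact Unitary.coe_mul_star_self _
  rw [← hU, ← hV, hs, hs] at h2
  refine ⟨V * Uᵀ, ?_, ?_, ?_⟩
  · rw [Matrix.transpose_mul, Matrix.transpose_transpose, Matrix.mul_assoc, ← Matrix.mul_assoc Uᵀ,
      u1, Matrix.one_mul, v2]
  · rw [Matrix.transpose_mul, Matrix.transpose_transpose, Matrix.mul_assoc, ← Matrix.mul_assoc Vᵀ,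
      v1, Matrix.one_mul, u2]
  · rw [h2, Matrix.transpose_mul, Matrix.transpose_transpose]
    simp only [Matrix.mul_assoc]

theorem aux_act_bilin {n : ℕ} {μ : Law n} (h : IsBilin μ) (g : GL (Fin n) ℝ) :
    IsBilin (act g μ) := by
  constructor
  · intro X
    constructor
    · intro Y Z
      simp only [act, Matrix.mulVec_add, (h.1 _).map_add]
    · intro t Y
      simp only [act, Matrix.mulVec_smul, (h.1 _).map_smul]
  · intro X
    constructor
    · intro Y Z
      simp only [act, Matrix.mulVec_add, (h.2 _).map_add]
    · intro t Y
      simp only [act, Matrix.mulVec_smul, (h.2 _).map_smul]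

theorem aux_act_skew {n : ℕ} {μ : Law n} (h : IsSkew μ) (g : GL (Fin n) ℝ) :
    IsSkew (act g μ) := by
  intro X Y
  simp only [act]
  rw [h, Matrix.mulVec_neg]

theorem aux_act_act {n : ℕ} (μ : Law n) (g k : GL (Fin n) ℝ) :
    act g (act k μ) = act (g * k) μ := by
  funext X Y
  simp [act, Matrix.mulVec_mulVec, _root_.mul_inv_rev]

theorem aux_expand {n : ℕ} {μ : Law n} (h : IsBilin μ) (X Y : Fin n → ℝ) (k : Fin n) :
    μ X Y k = ∑ a, ∑ b, X a * Y b * μ (bVec a) (bVec b) k := by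
  have e : ∀ X : Fin n → ℝ, X = ∑ a, X a • bVec a := by
    intro X
    funext j
    simp [bVec, Finset.sum_apply, Pi.single_apply]
  have h2 : ∀ Y, μ X Y = ∑ a, X a • μ (bVec a) Y := by
    intro Y
    have := map_sum (h.2 Y).mk' (fun a => X a • bVec a) Finset.univ
    rw [← e X] at this
    simpa [(h.2 Y).map_smul] using this
  have h1 : ∀ X, μ X Y = ∑ b, Y b • μ X (bVec b) := by
    intro X
    have := map_sum (h.1 X).mk' (fun a => Y a • bVec a) Finset.univ
    rw [← e Y] at this
    simpa [(h.1 X).map_smul] using this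
  rw [h2]
  simp only [h1, Finset.sum_apply, Pi.smul_apply, smul_eq_mul, Finset.mul_sum, mul_assoc]

theorem aux_conj {n : ℕ} (K : Matrix (Fin n) (Fin n) ℝ) (hK : Kᵀ * K = 1)
    (F F' : Fin n → Matrix (Fin n) (Fin n) ℝ)
    (h : ∀ p, F' p = ∑ a, K p a • (K * F a * Kᵀ)) (p q : Fin n) :
    (F' p * (F' q)ᵀ).trace = ∑ a, ∑ b, K p a * K q b * (F a * (F b)ᵀ).trace := by
  have key : ∀ a b, (K * F a * Kᵀ * (K * F b * Kᵀ)ᵀ).trace = (F a * (F b)ᵀ).trace := by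
    intro a b
    have : K * F a * Kᵀ * (K * F b * Kᵀ)ᵀ = K * (F a * (F b)ᵀ * Kᵀ) := by
      simp only [Matrix.transpose_mul, Matrix.transpose_transpose, Matrix.mul_assoc]
      rw [← Matrix.mul_assoc Kᵀ K, hK, Matrix.one_mul]
    rw [this, Matrix.trace_mul_comm, Matrix.mul_assoc, hK, Matrix.mul_one]
  rw [h, h, Matrix.transpose_sum, Finset.sum_mul]
  simp only [Finset.mul_sum, Matrix.trace_sum, Matrix.transpose_smul, Matrix.smul_mul,
    Matrix.mul_smul, Matrix.trace_smul, key, smul_eq_mul]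
  refine Finset.sum_congr rfl fun a _ => Finset.sum_congr rfl fun b _ => ?_
  ring

theorem aux_moment {n : ℕ} (μ : Law n) (p q : Fin n) :
    momentMap μ p q =
      -2 * (Matrix.of (fun i j => μ (bVec p) (bVec i) j) *
          (Matrix.of (fun i j => μ (bVec q) (bVec i) j))ᵀ).trace
      + (Matrix.of (fun i j => μ (bVec i) (bVec j) p) *
          (Matrix.of (fun i j => μ (bVec i) (bVec j) q))ᵀ).trace := by
  simp only [momentMap, Matrix.of_apply, Matrix.trace, Matrix.diag, Matrix.mul_apply,
    Matrix.transpose_apply]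
  ring

theorem aux_equiv {n : ℕ} {μ : Law n} (hb : IsBilin μ) (g : GL (Fin n) ℝ)
    (K : Matrix (Fin n) (Fin n) ℝ) (hK : Kᵀ * K = 1)
    (hg : (g : Matrix (Fin n) (Fin n) ℝ) = K)
    (hgi : ((g⁻¹ : GL (Fin n) ℝ) : Matrix (Fin n) (Fin n) ℝ) = Kᵀ) :
    momentMap (act g μ) = K * momentMap μ * Kᵀ := by
  have hC : ∀ i j k, act g μ (bVec i) (bVec j) k =
      ∑ c, ∑ a, ∑ b, K k c * (K i a * K j b * μ (bVec a) (bVec b) c) := by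
    intro i j k
    simp only [act, hg, hgi, Matrix.mulVec, dotProduct]
    refine Finset.sum_congr rfl fun c _ => ?_
    rw [aux_expand hb]
    simp [bVec, Pi.single_apply, Finset.mul_sum]
  ext p q
  rw [aux_moment, aux_conj K hK (fun a => Matrix.of (fun i j => μ (bVec a) (bVec i) j))
      (fun p => Matrix.of (fun i j => act g μ (bVec p) (bVec i) j)),
    aux_conj K hK (fun a => Matrix.of (fun i j => μ (bVec i) (bVec j) a))
      (fun p => Matrix.of (fun i j => act g μ (bVec i) (bVec j) p))]
  · simp only [Matrix.mul_apply, aux_moment, Matrix.transpose_apply, Finset.sum_mul,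
      Finset.mul_sum, ← Finset.sum_add_distrib]
    rw [Finset.sum_comm]
    refine Finset.sum_congr rfl fun a _ => Finset.sum_congr rfl fun b _ => ?_
    simp only [Matrix.trace, Matrix.diag, Matrix.mul_apply, Matrix.transpose_apply]
    ring
  · intro p
    ext i j
    simp only [Matrix.of_apply, hC, Matrix.sum_apply, Matrix.smul_apply, Matrix.mul_apply,
      Matrix.transpose_apply, smul_eq_mul, Finset.mul_sum, Finset.sum_mul]
    refine Finset.sum_congr rfl fun c _ => ?_
    rw [Finset.sum_comm]
    refine Finset.sum_congr rfl fun a _ =>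
      Finset.sum_congr rfl fun b _ => ?_
    ring
  · intro p
    ext i j
    simp only [Matrix.of_apply, hC, Matrix.sum_apply, Matrix.smul_apply, Matrix.mul_apply,
      Matrix.transpose_apply, smul_eq_mul, Finset.mul_sum, Finset.sum_mul]
    rw [Finset.sum_comm]
    refine Finset.sum_congr rfl fun c _ => Finset.sum_congr rfl fun a _ =>
      Finset.sum_congr rfl fun b _ => ?_
    ring

theorem aux_der_act {n : ℕ} {μ : Law n} (g : GL (Fin n) ℝ)
    (φ ψ : Matrix (Fin n) (Fin n) ℝ) (hd : IsDerivation μ φ)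
    (h : (g : Matrix (Fin n) (Fin n) ℝ) * φ = ψ * g) :
    IsDerivation (act g μ) ψ := by
  have h' : ((g⁻¹ : GL (Fin n) ℝ) : Matrix (Fin n) (Fin n) ℝ) * ψ
      = φ * ((g⁻¹ : GL (Fin n) ℝ) : Matrix (Fin n) (Fin n) ℝ) := by
    have e1 : ((g⁻¹ : GL (Fin n) ℝ) : Matrix (Fin n) (Fin n) ℝ) * g = 1 := by
      rw [← Units.val_mul]; simp
    have e2 : (g : Matrix (Fin n) (Fin n) ℝ) * ((g⁻¹ : GL (Fin n) ℝ) : Matrix (Fin n) (Fin n) ℝ)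
        = 1 := by
      rw [← Units.val_mul]; simp
    calc _ = ((g⁻¹ : GL (Fin n) ℝ) : Matrix (Fin n) (Fin n) ℝ) * (ψ * g)
          * ((g⁻¹ : GL (Fin n) ℝ) : Matrix (Fin n) (Fin n) ℝ) := by
          rw [Matrix.mul_assoc, Matrix.mul_assoc, e2, Matrix.mul_one]
      _ = _ := by rw [← h, ← Matrix.mul_assoc, e1, Matrix.one_mul]
  intro X Y
  simp only [act, Matrix.mulVec_mulVec, ← h, h']
  rw [← Matrix.mulVec_mulVec, hd, Matrix.mulVec_add]
  simp only [Matrix.mulVec_mulVec]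

theorem aux_der_smul {n : ℕ} {μ : Law n} (hb : IsBilin μ) (t : ℝ)
    (φ : Matrix (Fin n) (Fin n) ℝ) (hd : IsDerivation μ φ) : IsDerivation μ (t • φ) := by
  intro X Y
  simp only [Matrix.smul_mulVec, (hb.1 _).map_smul, (hb.2 _).map_smul]
  rw [hd, smul_add]

/-- scalar rescaling -/
theorem aux_scale {n : ℕ} {μ : Law n} (hb : IsBilin μ) (s : ℝ) (hs : s ≠ 0) :
    ∃ g : GL (Fin n) ℝ, momentMap (act g μ) = s ^ 2 • momentMap μ ∧
      ∀ φ, IsDerivation μ φ → IsDerivation (act g μ) φ := by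
  let g : GL (Fin n) ℝ := ⟨s⁻¹ • 1, s • 1, by simp [smul_smul, hs], by simp [smul_smul, hs]⟩
  have hg : (g : Matrix (Fin n) (Fin n) ℝ) = s⁻¹ • 1 := rfl
  have hgi : ((g⁻¹ : GL (Fin n) ℝ) : Matrix (Fin n) (Fin n) ℝ) = s • 1 := rfl
  refine ⟨g, ?_, ?_⟩
  · have : ∀ X Y, act g μ X Y = s • μ X Y := by
      intro X Y
      simp only [act, hg, hgi, Matrix.smul_mulVec, Matrix.one_mulVec, (hb.1 _).map_smul]
      rw [(hb.2 _).map_smul, smul_smul, smul_smul]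
      congr 1
      field_simp
    ext p q
    simp only [momentMap, this, Matrix.of_apply, Matrix.smul_apply, Pi.smul_apply, smul_eq_mul]
    have e : ∀ x y : ℝ, s * x * (s * y) = s ^ 2 * (x * y) := by intros; ring
    simp only [e, ← Finset.mul_sum]
    ring
  · intro φ hφ
    apply aux_der_act g φ φ hφ
    rw [hg]; simp

theorem aux_trace {n : ℕ} {μ : Law n} (hb : IsBilin μ) (hk : IsSkew μ) (x : Fin n → ℝ)
    (hd : IsDerivation μ (Matrix.diagonal x)) :
    ∑ k, x k * momentMap μ k k = 0 := by
  have hD : ∀ i j k, (x k - x i - x j) * μ (bVec i) (bVec j) k = 0 := by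
    intro i j k
    have e : ∀ i, (Matrix.diagonal x).mulVec (bVec i) = x i • bVec i := by
      intro i; ext j
      simp only [bVec, Matrix.mulVec_diagonal, Pi.smul_apply, Pi.single_apply, smul_eq_mul]
      split_ifs with h
      · rw [h]
      · simp
    have := congrFun (hd (bVec i) (bVec j)) k
    rw [e, e, (hb.1 _).map_smul, (hb.2 _).map_smul] at this
    simp only [Matrix.mulVec_diagonal, Pi.add_apply, Pi.smul_apply, smul_eq_mul] at this
    linarith
  have hsk : ∀ i j k, μ (bVec i) (bVec j) k ^ 2 = μ (bVec j) (bVec i) k ^ 2 := by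
    intro i j k
    rw [hk]; simp
  let c : Fin n → Fin n → Fin n → ℝ := fun i j k => μ (bVec i) (bVec j) k ^ 2
  have hm : ∀ k, x k * momentMap μ k k
      = -(∑ i, ∑ j, x k * c k i j) - (∑ i, ∑ j, x k * c i k j) + ∑ i, ∑ j, x k * c i j k := by
    intro k
    have : ∀ i j, c i k j = c k i j := fun i j => hsk i k j
    simp only [momentMap, Matrix.of_apply, ← pow_two, this, ← Finset.mul_sum]
    simp only [c]
    ring
  simp only [hm, Finset.sum_add_distrib, Finset.sum_sub_distrib, Finset.sum_neg_distrib]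
  have e2 : ∑ k, ∑ i, ∑ j, x k * c i k j = ∑ i, ∑ j, ∑ k, x j * c i j k := Finset.sum_comm
  have e3 : ∑ k, ∑ i, ∑ j, x k * c i j k = ∑ i, ∑ j, ∑ k, x k * c i j k := by
    rw [Finset.sum_comm]
    exact Finset.sum_congr rfl fun i _ => Finset.sum_comm
  rw [e2, e3, ← Finset.sum_neg_distrib, ← Finset.sum_sub_distrib, ← Finset.sum_add_distrib]
  simp only [← Finset.sum_neg_distrib, ← Finset.sum_sub_distrib, ← Finset.sum_add_distrib]
  refine Finset.sum_eq_zero fun i _ => Finset.sum_eq_zero fun j _ => Finset.sum_eq_zero fun k _ => ?_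
  linear_combination (μ (bVec i) (bVec j) k) * hD i j k

theorem aux_zero {n : ℕ} {μ : Law n} (hb : IsBilin μ) (t : ℝ) (ht : t ≠ 0)
    (hd : IsDerivation μ (Matrix.diagonal fun _ => t)) : momentMap μ = 0 := by
  have : ∀ X Y, μ X Y = 0 := by
    intro X Y
    have h := hd X Y
    have e : ∀ X : Fin n → ℝ, (Matrix.diagonal fun _ => t).mulVec X = t • X := by
      intro X; ext i; simp [Matrix.mulVec_diagonal]
    rw [e, e, e, (hb.1 _).map_smul, (hb.2 _).map_smul] at h
    have h' : t • μ X Y = 0 := by simpa using h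
    exact (smul_eq_zero.1 h').resolve_left ht
  ext p q
  simp [momentMap, this]

theorem aux_sum {n r : ℕ} (N : Fin r → ℕ) (σ : Fin n → Fin r)
    (hσcard : ∀ i, (Finset.univ.filter fun k => σ k = i).card = N i) (f : Fin r → ℝ) :
    ∑ i, (N i : ℝ) * f i = ∑ k, f (σ k) := by
  rw [← Finset.sum_fiberwise_of_maps_to (g := σ) (t := Finset.univ) (fun _ _ => Finset.mem_univ _)]
  refine Finset.sum_congr rfl fun i _ => ?_
  rw [Finset.sum_congr rfl (g := fun _ => f i)
    (fun k hk => by rw [(Finset.mem_filter.1 hk).2])]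
  rw [Finset.sum_const, hσcard, nsmul_eq_mul]

theorem aux_charpoly {n r : ℕ} (N : Fin r → ℕ) (σ : Fin n → Fin r)
    (hσcard : ∀ i, (Finset.univ.filter fun k => σ k = i).card = N i) (f : Fin r → ℝ) :
    (Matrix.diagonal fun k => f (σ k)).charpoly
      = ∏ i, (Polynomial.X - Polynomial.C (f i)) ^ (N i) := by
  rw [Matrix.charpoly_diagonal,
    ← Finset.prod_fiberwise_of_maps_to (g := σ) (t := Finset.univ) (fun _ _ => Finset.mem_univ _)]
  refine Finset.prod_congr rfl fun i _ => ?_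
  rw [Finset.prod_congr rfl (g := fun _ => Polynomial.X - Polynomial.C (f i))
    (fun k hk => by rw [(Finset.mem_filter.1 hk).2])]
  rw [Finset.prod_const, hσcard]

theorem aux_cs {n : ℕ} (x : Fin n → ℝ) :
    ∑ k, ((n : ℝ) * x k - ∑ j, x j) ^ 2 = n * ((n : ℝ) * (∑ k, x k ^ 2) - (∑ k, x k) ^ 2) := by
  have : ∀ k, ((n : ℝ) * x k - ∑ j, x j) ^ 2
      = (n:ℝ)^2 * x k ^ 2 - (2 * n * (∑ j, x j)) * x k + (∑ j, x j)^2 := by intro k; ring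
  simp only [this, Finset.sum_add_distrib, Finset.sum_sub_distrib, ← Finset.mul_sum]
  simp
  ring

/-- characterization of Einstein nilradicals of a given eigenvalue type
(Corollary `beta`). -/
theorem stmt_0 (n r : ℕ) (μ : Law n) (hμ : IsNilpotentLaw μ)
    (d N : Fin r → ℕ) (hmono : StrictMono d) (hdpos : ∀ i, 0 < d i)
    (hcoprime : Finset.univ.gcd d = 1)
    (hNpos : ∀ i, 0 < N i) (hsum : ∑ i, N i = n)
    (σ : Fin n → Fin r) (hσmono : Monotone σ)
    (hσcard : ∀ i, (Finset.univ.filter fun k => σ k = i).card = N i) :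
    -- (i) μ is an Einstein nilradical of eigenvalue type (d₁ < ... < d_r; n₁, ..., n_r)
    (∃ g : GL (Fin n) ℝ, ∃ c : ℝ, ∃ φ : Matrix (Fin n) (Fin n) ℝ,
      c < 0 ∧ φ.IsSymm ∧ IsDerivation (act g μ) φ ∧
      momentMap (act g μ) = c • (1 : Matrix (Fin n) (Fin n) ℝ) + φ ∧
      ∃ a : ℝ, 0 < a ∧
        (a • φ).charpoly = ∏ i, (Polynomial.X - Polynomial.C ((d i : ℝ))) ^ (N i))
    ↔
    -- (ii) some μ̃ in the orbit has D as a derivation and the prescribed moment map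
    (∃ g : GL (Fin n) ℝ,
      IsDerivation (act g μ) (Matrix.diagonal fun k => ((d (σ k) : ℝ))) ∧
      momentMap (act g μ) =
        ((∑ i, (N i : ℝ) * (d i : ℝ)) /
            ((n : ℝ) * (∑ i, (N i : ℝ) * (d i : ℝ) ^ 2)
              - (∑ i, (N i : ℝ) * (d i : ℝ)) ^ 2)) •
          ((-((∑ i, (N i : ℝ) * (d i : ℝ) ^ 2) / (∑ i, (N i : ℝ) * (d i : ℝ)))) •
              (1 : Matrix (Fin n) (Fin n) ℝ)
            + Matrix.diagonal fun k => ((d (σ k) : ℝ)))) := by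
  obtain ⟨⟨hb, hk, -⟩, -⟩ := hμ
  have hr : 0 < r := by
    rcases Nat.eq_zero_or_pos r with h | h
    · subst h; simp at hcoprime
    · exact h
  have hn : 0 < n := by
    rw [← hsum]
    exact Finset.sum_pos (fun i _ => hNpos i) ⟨⟨0, hr⟩, Finset.mem_univ _⟩
  have hn' : (0 : ℝ) < n := by exact_mod_cast hn
  rw [aux_sum N σ hσcard (fun i => (d i : ℝ)), aux_sum N σ hσcard (fun i => (d i : ℝ) ^ 2)]
  rw [← aux_charpoly N σ hσcard (fun i => (d i : ℝ))]
  obtain ⟨x, hx⟩ : ∃ x : Fin n → ℝ, x = fun k => (d (σ k) : ℝ) := ⟨_, rfl⟩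
  have hx1 : ∀ k, (d (σ k) : ℝ) = x k := fun k => by rw [hx]
  simp only [hx1]
  have hxpos : ∀ k, 0 < x k := fun k => by rw [← hx1]; exact_mod_cast hdpos _
  have hne : (Finset.univ : Finset (Fin n)).Nonempty := ⟨⟨0, hn⟩, Finset.mem_univ _⟩
  have hcs := aux_cs x
  obtain ⟨S1, hS1⟩ : ∃ S, S = ∑ k, x k := ⟨_, rfl⟩
  obtain ⟨S2, hS2⟩ : ∃ S, S = ∑ k, x k ^ 2 := ⟨_, rfl⟩
  have hS1p : 0 < S1 := by rw [hS1]; exact Finset.sum_pos (fun k _ => hxpos k) hne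
  have hS2p : 0 < S2 := by
    rw [hS2]; exact Finset.sum_pos (fun k _ => pow_pos (hxpos k) 2) hne
  rw [← hS1, ← hS2] at hcs ⊢
  have hQ0 : 0 ≤ (n : ℝ) * S2 - S1 ^ 2 := by
    have : 0 ≤ (n : ℝ) * (n * S2 - S1 ^ 2) := by
      rw [← hcs]; exact Finset.sum_nonneg fun _ _ => sq_nonneg _
    exact nonneg_of_mul_nonneg_right this hn'
  -- reduction of (i) to the diagonal case
  have red : ∀ (g : GL (Fin n) ℝ) (c a : ℝ) (φ : Matrix (Fin n) (Fin n) ℝ), φ.IsSymm → 0 < a →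
      IsDerivation (act g μ) φ →
      momentMap (act g μ) = c • (1 : Matrix (Fin n) (Fin n) ℝ) + φ →
      (a • φ).charpoly = (Matrix.diagonal x).charpoly →
      ∃ g : GL (Fin n) ℝ, IsDerivation (act g μ) (Matrix.diagonal x) ∧
        momentMap (act g μ) = c • (1 : Matrix (Fin n) (Fin n) ℝ) + a⁻¹ • Matrix.diagonal x := by
    intro g c a φ hφ ha hd hm hc
    obtain ⟨K, k1, k2, k3⟩ := aux_diag (a • φ) (Matrix.diagonal x)
      (by rw [Matrix.IsSymm, Matrix.transpose_smul, hφ]) (Matrix.diagonal_transpose x) hc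
    let k : GL (Fin n) ℝ := ⟨K, Kᵀ, k1, k2⟩
    have hbg := aux_act_bilin hb g
    refine ⟨k * g, ?_, ?_⟩
    · rw [← aux_act_act]
      refine aux_der_act k (a • φ) _ (aux_der_smul hbg a φ hd) ?_
      change K * (a • φ) = Matrix.diagonal x * K
      rw [← k3, Matrix.mul_assoc _ Kᵀ, k2, Matrix.mul_one]
    · rw [← aux_act_act, aux_equiv hbg k K k2 rfl rfl, hm, ← k3]
      simp [Matrix.mul_add, Matrix.add_mul, k1, smul_smul, ha.ne']
  rcases hQ0.eq_or_lt with hQ | hQ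
  · -- degenerate case: all weights equal
    have hconst : x = fun _ => S1 / n := by
      funext k
      rw [← hQ, mul_zero] at hcs
      have := (Finset.sum_eq_zero_iff_of_nonneg (fun _ _ => sq_nonneg _)).1 hcs k (Finset.mem_univ _)
      have := pow_eq_zero_iff (two_ne_zero) |>.1 this
      rw [eq_div_iff hn'.ne']
      linarith
    have ht : 0 < S1 / n := by positivity
    have hz : ∀ g, IsDerivation (act g μ) (Matrix.diagonal x) → momentMap (act g μ) = 0 := by
      intro g hd
      rw [hconst] at hd
      exact aux_zero (aux_act_bilin hb g) _ ht.ne' hd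
    rw [← hQ]
    constructor
    · rintro ⟨g, c, φ, -, hφ, hd, hm, a, ha, hc⟩
      obtain ⟨g', h1, -⟩ := red g c a φ hφ ha hd hm hc
      exact ⟨g', h1, by rw [hz g' h1]; simp⟩
    · rintro ⟨g, hd, -⟩
      refine ⟨g, -(S1 / n), Matrix.diagonal x, by linarith, Matrix.diagonal_transpose x, hd, ?_,
        1, one_pos, by rw [one_smul]⟩
      rw [hz g hd, hconst]
      ext i j
      simp [Matrix.diagonal_apply, Matrix.one_apply]
  · constructor
    · rintro ⟨g, c, φ, -, hφ, hd, hm, a, ha, hc⟩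
      obtain ⟨g', h1, h2⟩ := red g c a φ hφ ha hd hm hc
      have hb' := aux_act_bilin hb g'
      have htr := aux_trace hb' (aux_act_skew hk g') x h1
      have hc' : c = - (S2 / S1) * a⁻¹ := by
        rw [h2] at htr
        have : ∑ k, x k * ((c • (1 : Matrix (Fin n) (Fin n) ℝ) + a⁻¹ • Matrix.diagonal x) k k)
            = c * S1 + a⁻¹ * S2 := by
          rw [hS1, hS2, Finset.mul_sum, Finset.mul_sum, ← Finset.sum_add_distrib]
          refine Finset.sum_congr rfl fun k _ => ?_
          simp
          ring
        rw [this] at htr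
        field_simp
        field_simp at htr
        linarith
      have hpos : 0 < S1 / (n * S2 - S1 ^ 2) * a := by positivity
      obtain ⟨k, hk1, hk2⟩ := aux_scale hb' (Real.sqrt (S1 / (n * S2 - S1 ^ 2) * a))
        (Real.sqrt_pos.2 hpos).ne'
      refine ⟨k * g', ?_, ?_⟩
      · rw [← aux_act_act]; exact hk2 _ h1
      · rw [← aux_act_act, hk1, Real.sq_sqrt hpos.le, h2, hc', ← smul_smul]
        congr 1
        rw [smul_add, smul_smul, smul_smul]
        congr 2
        · field_simp
        · simp [ha.ne']
    · rintro ⟨g, hd, hm⟩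
      have hq : 0 < S1 / (n * S2 - S1 ^ 2) := by positivity
      refine ⟨g, S1 / (n * S2 - S1 ^ 2) * (-(S2 / S1)), (S1 / (n * S2 - S1 ^ 2)) • Matrix.diagonal x,
        ?_, ?_, aux_der_smul (aux_act_bilin hb g) _ _ hd, ?_, (S1 / (n * S2 - S1 ^ 2))⁻¹,
        inv_pos.2 hq, ?_⟩
      · have : 0 < S1 / (n * S2 - S1 ^ 2) * (S2 / S1) := by positivity
        linarith
      · rw [Matrix.IsSymm, Matrix.transpose_smul, Matrix.diagonal_transpose]
      · rw [hm, smul_add, smul_smul]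
      · rw [smul_smul, inv_mul_cancel₀ hq.ne', one_smul]
end
end

section
/- Let λ : ℝ⁷ × ℝ⁷ → ℝ⁷ be a skew-symmetric bilinear map such that the diagonal map D = diag(1,1,2,3,3,4,5) (with respect to the canonical basis e_1,...,e_7) is a derivation of λ, i.e. Dλ(X,Y) = λ(DX,Y) + λ(X,DY) for all X,Y. Then λ(e_1,e_2) ∈ span(e_3), λ(e_1,e_3) ∈ span(e_4,e_5), λ(e_1,e_4) ∈ span(e_6), λ(e_1,e_5) ∈ span(e_6), λ(e_1,e_6) ∈ span(e_7), λ(e_2,e_3) ∈ span(e_4,e_5), λ(e_2,e_4) ∈ span(e_6), λ(e_2,e_5) ∈ span(e_6), λ(e_2,e_6) ∈ span(e_7), λ(e_3,e_4) ∈ span(e_7), λ(e_3,e_5) ∈ span(e_7), and λ(e_i,e_j) = 0 for every other pair i < j. -/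
open Matrix BigOperators Polynomial

noncomputable section

def wt7 : Fin 7 → ℕ := ![1, 1, 2, 3, 3, 4, 5]

theorem diag_bVec (d : Fin 7 → ℝ) (i : Fin 7) :
    (Matrix.diagonal d).mulVec (bVec i) = d i • bVec i := by
  ext k
  rw [Matrix.mulVec_diagonal]
  by_cases h : k = i
  · subst h; simp [bVec]
  · simp [bVec, Pi.single_apply, h]

theorem coord_zero (lam : Law 7) (hbil : IsBilin lam)
    (hder : IsDerivation lam
      (Matrix.diagonal (![1, 1, 2, 3, 3, 4, 5] : Fin 7 → ℝ)))
    (i j k : Fin 7) (h : wt7 k ≠ wt7 i + wt7 j) :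
    lam (bVec i) (bVec j) k = 0 := by
  have hw : (![1, 1, 2, 3, 3, 4, 5] : Fin 7 → ℝ) = fun i => (wt7 i : ℝ) := by
    ext i; fin_cases i <;> simp [wt7]
  rw [hw] at hder
  have h1 := hder (bVec i) (bVec j)
  rw [diag_bVec, diag_bVec, (hbil.1 _).map_smul, (hbil.2 (bVec j)).map_smul] at h1
  have h2 := congrFun h1 k
  rw [Matrix.mulVec_diagonal] at h2
  simp only [Pi.add_apply, Pi.smul_apply, smul_eq_mul] at h2
  have h3 : ((wt7 k : ℝ) - (wt7 i + wt7 j)) * lam (bVec i) (bVec j) k = 0 := by linarith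
  rcases mul_eq_zero.mp h3 with h4 | h4
  · exact absurd (by exact_mod_cast sub_eq_zero.mp h4) h
  · exact h4

theorem mem_one (v : Fin 7 → ℝ) (a : Fin 7) (h : ∀ k, k ≠ a → v k = 0) :
    v ∈ Submodule.span ℝ {bVec a} := by
  rw [Submodule.mem_span_singleton]
  refine ⟨v a, ?_⟩
  ext k
  by_cases hk : k = a
  · subst hk; simp [bVec]
  · simp [bVec, Pi.single_apply, hk, h k hk]

theorem mem_two (v : Fin 7 → ℝ) (a b : Fin 7) (hab : a ≠ b)
    (h : ∀ k, k ≠ a → k ≠ b → v k = 0) :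
    v ∈ Submodule.span ℝ {bVec a, bVec b} := by
  rw [Submodule.mem_span_pair]
  refine ⟨v a, v b, ?_⟩
  ext k
  by_cases hk : k = a
  · subst hk; simp [bVec, Pi.single_apply, hab]
  · by_cases hk2 : k = b
    · subst hk2; simp [bVec, Pi.single_apply, hk]
    · simp [bVec, Pi.single_apply, hk, hk2, h k hk hk2]

/-- the form of any skew bilinear map on ℝ⁷ admitting
`diag(1,1,2,3,3,4,5)` as a derivation. -/
theorem stmt_2 (lam : Law 7) (hbil : IsBilin lam) (hskew : IsSkew lam)
    (hder : IsDerivation lam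
      (Matrix.diagonal (![1, 1, 2, 3, 3, 4, 5] : Fin 7 → ℝ))) :
    lam (bVec 0) (bVec 1) ∈ Submodule.span ℝ {bVec (2 : Fin 7)} ∧
    lam (bVec 0) (bVec 2) ∈ Submodule.span ℝ {bVec (3 : Fin 7), bVec 4} ∧
    lam (bVec 0) (bVec 3) ∈ Submodule.span ℝ {bVec (5 : Fin 7)} ∧
    lam (bVec 0) (bVec 4) ∈ Submodule.span ℝ {bVec (5 : Fin 7)} ∧
    lam (bVec 0) (bVec 5) ∈ Submodule.span ℝ {bVec (6 : Fin 7)} ∧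
    lam (bVec 1) (bVec 2) ∈ Submodule.span ℝ {bVec (3 : Fin 7), bVec 4} ∧
    lam (bVec 1) (bVec 3) ∈ Submodule.span ℝ {bVec (5 : Fin 7)} ∧
    lam (bVec 1) (bVec 4) ∈ Submodule.span ℝ {bVec (5 : Fin 7)} ∧
    lam (bVec 1) (bVec 5) ∈ Submodule.span ℝ {bVec (6 : Fin 7)} ∧
    lam (bVec 2) (bVec 3) ∈ Submodule.span ℝ {bVec (6 : Fin 7)} ∧
    lam (bVec 2) (bVec 4) ∈ Submodule.span ℝ {bVec (6 : Fin 7)} ∧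
    (∀ i j : Fin 7, i < j →
      (i, j) ∉ ({(0, 1), (0, 2), (0, 3), (0, 4), (0, 5), (1, 2), (1, 3), (1, 4),
        (1, 5), (2, 3), (2, 4)} : Set (Fin 7 × Fin 7)) →
      lam (bVec i) (bVec j) = 0) := by
  have key := coord_zero lam hbil hder
  refine ⟨mem_one _ _ ?_, mem_two _ _ _ (by decide) ?_, mem_one _ _ ?_, mem_one _ _ ?_,
    mem_one _ _ ?_, mem_two _ _ _ (by decide) ?_, mem_one _ _ ?_, mem_one _ _ ?_,
    mem_one _ _ ?_, mem_one _ _ ?_, mem_one _ _ ?_, ?_⟩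
  on_goal 12 =>
    intro i j hij hn
    ext k
    apply key
    simp only [Set.mem_insert_iff, Set.mem_singleton_iff] at hn
    revert i j k
    decide
  all_goals
    intro k
    intros
    apply key
    revert k
    decide
end
end

section
/- For real parameters a_1, ..., a_13, let μ(a_1,...,a_13) be the skew-symmetric bilinear map on ℝ⁷ determined by [e_1,e_2]=a_1 e_3, [e_1,e_3]=a_2 e_4+a_3 e_5, [e_1,e_4]=a_4 e_6, [e_1,e_5]=a_5 e_6, [e_1,e_6]=a_6 e_7, [e_2,e_3]=a_7 e_4+a_8 e_5, [e_2,e_4]=a_9 e_6, [e_2,e_5]=a_10 e_6, [e_2,e_6]=a_11 e_7, [e_3,e_4]=a_12 e_7, [e_3,e_5]=a_13 e_7, all other brackets of basis vectors being zero. Then μ(a_1,...,a_13) satisfies the Jacobi identity if and only if −a_10 a_6 + a_5 a_11 + a_1 a_13 = 0, −a_9 a_6 + a_4 a_11 + a_1 a_12 = 0, and −a_8 a_5 + a_3 a_10 − a_7 a_4 + a_2 a_9 = 0. -/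
open Matrix BigOperators Polynomial

noncomputable section

/-- structure constants of the family `μ(a_1,...,a_13)` of skew bilinear maps
admitting `diag(1,1,2,3,3,4,5)` as a derivation. -/
def cParam (a1 a2 a3 a4 a5 a6 a7 a8 a9 a10 a11 a12 a13 : ℝ) :
    Fin 7 → Fin 7 → Fin 7 → ℝ := fun i j =>
  if i = 0 ∧ j = 1 then Pi.single 2 a1
  else if i = 0 ∧ j = 2 then Pi.single 3 a2 + Pi.single 4 a3
  else if i = 0 ∧ j = 3 then Pi.single 5 a4
  else if i = 0 ∧ j = 4 then Pi.single 5 a5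
  else if i = 0 ∧ j = 5 then Pi.single 6 a6
  else if i = 1 ∧ j = 2 then Pi.single 3 a7 + Pi.single 4 a8
  else if i = 1 ∧ j = 3 then Pi.single 5 a9
  else if i = 1 ∧ j = 4 then Pi.single 5 a10
  else if i = 1 ∧ j = 5 then Pi.single 6 a11
  else if i = 2 ∧ j = 3 then Pi.single 6 a12
  else if i = 2 ∧ j = 4 then Pi.single 6 a13
  else 0

theorem mkLaw_cParam_eq (a1 a2 a3 a4 a5 a6 a7 a8 a9 a10 a11 a12 a13 : ℝ) (X Y : Fin 7 → ℝ) :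
    mkLaw (cParam a1 a2 a3 a4 a5 a6 a7 a8 a9 a10 a11 a12 a13) X Y =
      ![0, 0, a1 * (X 0 * Y 1 - X 1 * Y 0),
        a2 * (X 0 * Y 2 - X 2 * Y 0) + a7 * (X 1 * Y 2 - X 2 * Y 1),
        a3 * (X 0 * Y 2 - X 2 * Y 0) + a8 * (X 1 * Y 2 - X 2 * Y 1),
        a4 * (X 0 * Y 3 - X 3 * Y 0) + a5 * (X 0 * Y 4 - X 4 * Y 0)
          + a9 * (X 1 * Y 3 - X 3 * Y 1) + a10 * (X 1 * Y 4 - X 4 * Y 1),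
        a6 * (X 0 * Y 5 - X 5 * Y 0) + a11 * (X 1 * Y 5 - X 5 * Y 1)
          + a12 * (X 2 * Y 3 - X 3 * Y 2) + a13 * (X 2 * Y 4 - X 4 * Y 2)] := by
  funext k
  fin_cases k <;> simp [mkLaw, cParam, Fin.sum_univ_seven, Pi.single_apply] <;> ring

/-- the Jacobi identity for `μ(a_1,...,a_13)` is equivalent to three
polynomial equations in the parameters. -/
theorem stmt_3 (a1 a2 a3 a4 a5 a6 a7 a8 a9 a10 a11 a12 a13 : ℝ) :
    IsJacobi (mkLaw (cParam a1 a2 a3 a4 a5 a6 a7 a8 a9 a10 a11 a12 a13)) ↔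
      (-a10 * a6 + a5 * a11 + a1 * a13 = 0 ∧
       -a9 * a6 + a4 * a11 + a1 * a12 = 0 ∧
       -a8 * a5 + a3 * a10 - a7 * a4 + a2 * a9 = 0) := by
  constructor
  · intro h
    have h1 := congrFun (h (bVec 0) (bVec 1) (bVec 4)) 6
    have h2 := congrFun (h (bVec 0) (bVec 1) (bVec 3)) 6
    have h3 := congrFun (h (bVec 0) (bVec 1) (bVec 2)) 5
    simp only [mkLaw_cParam_eq] at h1 h2 h3
    simp [bVec, Pi.single_apply, Fin.ext_iff] at h1 h2 h3
    refine ⟨?_, ?_, ?_⟩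
    · linear_combination h1
    · linear_combination h2
    · linear_combination h3
  · rintro ⟨h1, h2, h3⟩ X Y Z
    simp only [mkLaw_cParam_eq]
    funext k
    fin_cases k
    · simp
    · simp
    · simp
    · simp
      ring
    · simp
      ring
    · simp
      linear_combination (X 0 * (Y 1 * Z 2 - Y 2 * Z 1) - X 1 * (Y 0 * Z 2 - Y 2 * Z 0)
        + X 2 * (Y 0 * Z 1 - Y 1 * Z 0)) * h3
    · simp
      linear_combination (X 0 * (Y 1 * Z 3 - Y 3 * Z 1) - X 1 * (Y 0 * Z 3 - Y 3 * Z 0)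
        + X 3 * (Y 0 * Z 1 - Y 1 * Z 0)) * h2 +
        (X 0 * (Y 1 * Z 4 - Y 4 * Z 1) - X 1 * (Y 0 * Z 4 - Y 4 * Z 0)
        + X 4 * (Y 0 * Z 1 - Y 1 * Z 0)) * h1
end
end

section
/- Let μ̃ be the skew-symmetric bilinear map on ℝ⁷ with nonzero brackets [e_1,e_2] = (√611/94)e_3, [e_1,e_3] = (√235/47)e_5, [e_1,e_5] = (√611/94)e_6, [e_2,e_3] = (√235/94)e_4, [e_2,e_4] = (√611/94)e_6, [e_2,e_6] = (√705/94)e_7, [e_3,e_5] = −(√705/94)e_7. Then μ̃ satisfies the Jacobi identity, (ℝ⁷, μ̃) is a nilpotent Lie algebra, D = diag(1,1,2,3,3,4,5) is a derivation of μ̃, and m(μ̃) = diag(−23/47, −23/47, −27/94, −4/47, −4/47, 11/94, 15/47) = −(65/94) I + (19/94) D; in particular μ̃ is an Einstein nilradical. -/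
open Matrix BigOperators Polynomial

noncomputable section

/-- structure constants of the law `μ̃` from Example 1 (a nilsoliton law
isomorphic to `g_{1.17}`). -/
def cTilde : Fin 7 → Fin 7 → Fin 7 → ℝ := fun i j =>
  if i = 0 ∧ j = 1 then Pi.single 2 (Real.sqrt 611 / 94)
  else if i = 0 ∧ j = 2 then Pi.single 4 (Real.sqrt 235 / 47)
  else if i = 0 ∧ j = 4 then Pi.single 5 (Real.sqrt 611 / 94)
  else if i = 1 ∧ j = 2 then Pi.single 3 (Real.sqrt 235 / 94)
  else if i = 1 ∧ j = 3 then Pi.single 5 (Real.sqrt 611 / 94)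
  else if i = 1 ∧ j = 5 then Pi.single 6 (Real.sqrt 705 / 94)
  else if i = 2 ∧ j = 4 then Pi.single 6 (-(Real.sqrt 705 / 94))
  else 0

/-- the law `μ̃`. -/
def lawTilde : Law 7 := mkLaw cTilde

theorem lawTilde_eq (X Y : Fin 7 → ℝ) : lawTilde X Y =
    ![0, 0, (X 0 * Y 1 - X 1 * Y 0) * (Real.sqrt 611 / 94),
      (X 1 * Y 2 - X 2 * Y 1) * (Real.sqrt 235 / 94),
      (X 0 * Y 2 - X 2 * Y 0) * (Real.sqrt 235 / 47),
      (X 0 * Y 4 - X 4 * Y 0 + X 1 * Y 3 - X 3 * Y 1) * (Real.sqrt 611 / 94),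
      (X 1 * Y 5 - X 5 * Y 1 - X 2 * Y 4 + X 4 * Y 2) * (Real.sqrt 705 / 94)] := by
  funext k
  fin_cases k <;> simp [lawTilde, mkLaw, cTilde, Fin.sum_univ_seven, Pi.single_apply] <;> ring

theorem jacobi_aux : IsJacobi lawTilde := by
  intro X Y Z
  funext k
  simp only [lawTilde_eq]
  fin_cases k <;> simp <;> ring

theorem bilin_aux : IsBilin lawTilde := by
  constructor
  · intro X
    constructor
    · intro Y Z
      funext k
      simp only [lawTilde_eq]
      fin_cases k <;> simp <;> ring
    · intro c Y
      funext k
      simp only [lawTilde_eq]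
      fin_cases k <;> simp <;> ring
  · intro X
    constructor
    · intro Y Z
      funext k
      simp only [lawTilde_eq]
      fin_cases k <;> simp <;> ring
    · intro c Y
      funext k
      simp only [lawTilde_eq]
      fin_cases k <;> simp <;> ring

theorem skew_aux : IsSkew lawTilde := by
  intro X Y
  funext k
  simp only [lawTilde_eq]
  fin_cases k <;> simp <;> ring

theorem deriv_aux :
    IsDerivation lawTilde (Matrix.diagonal (![1, 1, 2, 3, 3, 4, 5] : Fin 7 → ℝ)) := by
  intro X Y
  funext k
  simp only [lawTilde_eq]
  fin_cases k <;> simp [Matrix.mulVec_diagonal] <;> ring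

/-- vectors vanishing on the coordinates of weight at most `k`. -/
def wt (k : ℕ) : Submodule ℝ (Fin 7 → ℝ) where
  carrier := {v | ∀ i, (![1, 1, 2, 3, 3, 4, 5] : Fin 7 → ℕ) i ≤ k → v i = 0}
  add_mem' := by
    intro a b ha hb i hi
    simp [ha i hi, hb i hi]
  zero_mem' := by
    intro i _
    rfl
  smul_mem' := by
    intro c a ha i hi
    simp [ha i hi]

theorem lcs_le (k : ℕ) : lcs lawTilde k ≤ wt k := by
  induction k with
  | zero =>
    intro v _ i hi
    fin_cases i <;> simp at hi
  | succ k ih =>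
    rw [lcs, Submodule.span_le]
    rintro z ⟨x, y, hy, rfl⟩ i hi
    have h := ih hy
    have h' : ∀ i, (![1, 1, 2, 3, 3, 4, 5] : Fin 7 → ℕ) i ≤ k → y i = 0 := h
    have h0 := h' 0
    have h1 := h' 1
    have h2 := h' 2
    have h3 := h' 3
    have h4 := h' 4
    have h5 := h' 5
    simp at h0 h1 h2 h3 h4 h5
    rw [lawTilde_eq]
    fin_cases i <;> simp at hi ⊢
    · rw [h0 (by omega), h1 (by omega)]; ring
    · rw [h1 (by omega), h2 (by omega)]; ring
    · rw [h0 (by omega), h2 (by omega)]; ring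
    · rw [h0 (by omega), h1 (by omega), h3 (by omega), h4 (by omega)]; ring
    · rw [h1 (by omega), h2 (by omega), h4 (by omega), h5 (by omega)]; ring

theorem nilp_aux : IsNilpotentLaw lawTilde := by
  refine ⟨⟨bilin_aux, skew_aux, jacobi_aux⟩, 5, ?_⟩
  rw [eq_bot_iff]
  intro v hv
  have h : ∀ i, (![1, 1, 2, 3, 3, 4, 5] : Fin 7 → ℕ) i ≤ 5 → v i = 0 := lcs_le 5 hv
  rw [Submodule.mem_bot]
  funext i
  apply h
  fin_cases i <;> simp

theorem moment_aux : momentMap lawTilde =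
    Matrix.diagonal (![-23/47, -23/47, -27/94, -4/47, -4/47, 11/94, 15/47] : Fin 7 → ℝ) := by
  have ha : Real.sqrt 611 ^ 2 = 611 := Real.sq_sqrt (by norm_num)
  have hb : Real.sqrt 235 ^ 2 = 235 := Real.sq_sqrt (by norm_num)
  have hc : Real.sqrt 705 ^ 2 = 705 := Real.sq_sqrt (by norm_num)
  ext k l
  simp only [momentMap, lawTilde_eq, Matrix.of_apply, bVec]
  fin_cases k <;> fin_cases l <;>
    simp [Fin.sum_univ_seven, Pi.single_apply] <;> ring_nf <;>
    simp only [ha, hb, hc] <;> norm_num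

theorem moment_aux2 : momentMap lawTilde =
    (-(65/94) : ℝ) • (1 : Matrix (Fin 7) (Fin 7) ℝ) +
      (19/94 : ℝ) • Matrix.diagonal (![1, 1, 2, 3, 3, 4, 5] : Fin 7 → ℝ) := by
  rw [moment_aux]
  ext k l
  by_cases h : k = l
  · subst h
    fin_cases k <;> simp <;> norm_num
  · simp [h]

theorem derivTilde_smul (c : ℝ) :
    IsDerivation lawTilde (c • Matrix.diagonal (![1, 1, 2, 3, 3, 4, 5] : Fin 7 → ℝ)) := by
  intro X Y
  rw [Matrix.smul_mulVec, Matrix.smul_mulVec, Matrix.smul_mulVec, deriv_aux X Y,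
    (bilin_aux.1 X).map_smul, (bilin_aux.2 Y).map_smul, smul_add]

theorem act_one : act 1 lawTilde = lawTilde := by
  funext X Y
  simp [act]

/-- `μ̃` is a nilpotent Lie algebra law, `diag(1,1,2,3,3,4,5)` is a
derivation of it, its moment map is the prescribed diagonal matrix
`−(65/94)I + (19/94)D`, and `μ̃` is an Einstein nilradical. -/
theorem stmt_4 :
    IsJacobi lawTilde ∧ IsNilpotentLaw lawTilde ∧
    IsDerivation lawTilde (Matrix.diagonal (![1, 1, 2, 3, 3, 4, 5] : Fin 7 → ℝ)) ∧
    momentMap lawTilde =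
      Matrix.diagonal (![-23/47, -23/47, -27/94, -4/47, -4/47, 11/94, 15/47] : Fin 7 → ℝ) ∧
    momentMap lawTilde =
      (-(65/94) : ℝ) • (1 : Matrix (Fin 7) (Fin 7) ℝ) +
        (19/94 : ℝ) • Matrix.diagonal (![1, 1, 2, 3, 3, 4, 5] : Fin 7 → ℝ) ∧
    IsEinsteinNilradical lawTilde := by
  refine ⟨jacobi_aux, nilp_aux, deriv_aux, moment_aux, moment_aux2, 1, -(65/94),
    (19/94 : ℝ) • Matrix.diagonal (![1, 1, 2, 3, 3, 4, 5] : Fin 7 → ℝ), by norm_num, ?_, ?_, ?_⟩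
  · simp [Matrix.IsSymm]
  · rw [act_one]
    exact derivTilde_smul _
  · rw [act_one]
    exact moment_aux2
end
end

section
/- The 7-dimensional nilpotent Lie algebra g_{1.17} is an Einstein nilradical of eigenvalue type (1<2<3<4<5; 2,1,2,1,1): there exists μ̃ in the GL_7(ℝ)-orbit of its law such that m(μ̃) = c I + φ with c < 0 and φ a symmetric derivation of μ̃ whose eigenvalues, rescaled to coprime positive integers, are 1,1,2,3,3,4,5. -/
open Matrix BigOperators Polynomial

noncomputable section

/-- structure constants of `g_{1.17}`. -/
def c117 : Fin 7 → Fin 7 → Fin 7 → ℝ := fun i j =>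
  if i = 0 ∧ j = 1 then Pi.single 2 1
  else if i = 0 ∧ j = 2 then Pi.single 3 1
  else if i = 0 ∧ j = 3 then Pi.single 5 1
  else if i = 0 ∧ j = 5 then Pi.single 6 1
  else if i = 1 ∧ j = 2 then Pi.single 4 1
  else if i = 1 ∧ j = 4 then Pi.single 5 1
  else if i = 1 ∧ j = 5 then Pi.single 6 1
  else if i = 2 ∧ j = 3 then Pi.single 6 (-1)
  else if i = 2 ∧ j = 4 then Pi.single 6 1
  else 0

/-- the Lie algebra law of `g_{1.17}`. -/
def law117 : Law 7 := mkLaw c117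


theorem law117_eq (X Y : Fin 7 → ℝ) : law117 X Y =
    ![0, 0, X 0 * Y 1 - X 1 * Y 0, X 0 * Y 2 - X 2 * Y 0, X 1 * Y 2 - X 2 * Y 1,
      (X 0 * Y 3 - X 3 * Y 0) + (X 1 * Y 4 - X 4 * Y 1),
      (X 0 * Y 5 - X 5 * Y 0) + (X 1 * Y 5 - X 5 * Y 1) - (X 2 * Y 3 - X 3 * Y 2)
        + (X 2 * Y 4 - X 4 * Y 2)] := by
  funext k
  fin_cases k <;>
    simp [law117, mkLaw, c117, Fin.sum_univ_seven, Pi.single_apply] <;> ring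

/-- the rescaled nilsoliton law. -/
def lawP (p q r : ℝ) : Law 7 := fun X Y =>
    ![0, 0, 13 * p * (X 0 * Y 1 - X 1 * Y 0), p * r * (X 1 * Y 2 - X 2 * Y 1),
      2 * p * r * (X 0 * Y 2 - X 2 * Y 0),
      13 * p * (X 0 * Y 4 - X 4 * Y 0) + 13 * p * (X 1 * Y 3 - X 3 * Y 1),
      p * q * r * (X 1 * Y 5 - X 5 * Y 1) - p * q * r * (X 2 * Y 4 - X 4 * Y 2)]

/-- change of basis. -/
def Pm (s t u v w x y : ℝ) : Matrix (Fin 7) (Fin 7) ℝ :=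
  !![s, t, 0, 0, 0, 0, 0;
     -s, t, 0, 0, 0, 0, 0;
     0, 0, u, 0, 0, 0, 0;
     0, 0, 0, v, w, 0, 0;
     0, 0, 0, v, -w, 0, 0;
     0, 0, 0, 0, 0, x, 0;
     0, 0, 0, 0, 0, 0, y]

/-- inverse change of basis. -/
def Gm (s t u v w x y : ℝ) : Matrix (Fin 7) (Fin 7) ℝ :=
  !![s⁻¹ / 2, -s⁻¹ / 2, 0, 0, 0, 0, 0;
     t⁻¹ / 2, t⁻¹ / 2, 0, 0, 0, 0, 0;
     0, 0, u⁻¹, 0, 0, 0, 0;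
     0, 0, 0, v⁻¹ / 2, v⁻¹ / 2, 0, 0;
     0, 0, 0, w⁻¹ / 2, -w⁻¹ / 2, 0, 0;
     0, 0, 0, 0, 0, x⁻¹, 0;
     0, 0, 0, 0, 0, 0, y⁻¹]

theorem Gm_mul_Pm {s t u v w x y : ℝ} (hs : s ≠ 0) (ht : t ≠ 0) (hu : u ≠ 0) (hv : v ≠ 0)
    (hw : w ≠ 0) (hx : x ≠ 0) (hy : y ≠ 0) :
    Gm s t u v w x y * Pm s t u v w x y = 1 := by
  ext i j
  fin_cases i <;> fin_cases j <;>
    simp [Gm, Pm, Matrix.mul_apply, Fin.sum_univ_seven] <;> field_simp <;> norm_num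

theorem law117_Pm {p q r : ℝ} (hp : p ^ 2 = 2) (hq : q ^ 2 = 3) (hr : r ^ 2 = 65)
    (X Y : Fin 7 → ℝ) :
    law117 ((Pm (2*q*r) (p*q*r) 60 (60*q) (30*p*q) (360/13*r) (720/13*r)).mulVec X)
      ((Pm (2*q*r) (p*q*r) 60 (60*q) (30*p*q) (360/13*r) (720/13*r)).mulVec Y) =
    (Pm (2*q*r) (p*q*r) 60 (60*q) (30*p*q) (360/13*r) (720/13*r)).mulVec (lawP p q r X Y) := by
  rw [law117_eq]
  funext k
  fin_cases k <;>
    simp [Pm, lawP, Matrix.mulVec, dotProduct, Fin.sum_univ_seven] <;> grind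

set_option maxHeartbeats 4000000 in
theorem momentMap_lawP {p q r : ℝ} (hp : p ^ 2 = 2) (hq : q ^ 2 = 3) (hr : r ^ 2 = 65) :
    momentMap (lawP p q r) = (-3380 : ℝ) • (1 : Matrix (Fin 7) (Fin 7) ℝ) +
      (988 : ℝ) • Matrix.diagonal ![1, 1, 2, 3, 3, 4, 5] := by
  ext k l
  fin_cases k <;> fin_cases l <;>
    simp [momentMap, lawP, bVec, Fin.sum_univ_seven, Pi.single_apply,
      Matrix.one_apply] <;> grind

/-- `g_{1.17}` is an Einstein nilradical of eigenvalue type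
`(1<2<3<4<5; 2,1,2,1,1)`. -/
theorem stmt_6 :
    ∃ g : GL (Fin 7) ℝ, ∃ c : ℝ, ∃ φ : Matrix (Fin 7) (Fin 7) ℝ,
      c < 0 ∧ φ.IsSymm ∧ IsDerivation (act g law117) φ ∧
      momentMap (act g law117) = c • (1 : Matrix (Fin 7) (Fin 7) ℝ) + φ ∧
      ∃ a : ℝ, 0 < a ∧
        (a • φ).charpoly =
          (Polynomial.X - Polynomial.C (1 : ℝ)) ^ 2 *
          (Polynomial.X - Polynomial.C (2 : ℝ)) *
          (Polynomial.X - Polynomial.C (3 : ℝ)) ^ 2 *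
          (Polynomial.X - Polynomial.C (4 : ℝ)) *
          (Polynomial.X - Polynomial.C (5 : ℝ)) := by
  obtain ⟨p, hp0, hp⟩ : ∃ p : ℝ, p ≠ 0 ∧ p ^ 2 = 2 := ⟨√2, by positivity, by norm_num⟩
  obtain ⟨q, hq0, hq⟩ : ∃ p : ℝ, p ≠ 0 ∧ p ^ 2 = 3 := ⟨√3, by positivity, by norm_num⟩
  obtain ⟨r, hr0, hr⟩ : ∃ p : ℝ, p ≠ 0 ∧ p ^ 2 = 65 := ⟨√65, by positivity, by norm_num⟩
  have hGP : Gm (2*q*r) (p*q*r) 60 (60*q) (30*p*q) (360/13*r) (720/13*r) *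
      Pm (2*q*r) (p*q*r) 60 (60*q) (30*p*q) (360/13*r) (720/13*r) = 1 :=
    Gm_mul_Pm (by positivity) (by positivity) (by positivity) (by positivity) (by positivity)
      (by positivity) (by positivity)
  let g : GL (Fin 7) ℝ := ⟨_, _, hGP, mul_eq_one_comm.mp hGP⟩
  have hact : act g law117 = lawP p q r := by
    funext X Y
    change (Gm _ _ _ _ _ _ _).mulVec
      (law117 ((Pm _ _ _ _ _ _ _).mulVec X) ((Pm _ _ _ _ _ _ _).mulVec Y)) = _
    rw [law117_Pm hp hq hr, Matrix.mulVec_mulVec, hGP, Matrix.one_mulVec]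
  refine ⟨g, -3380, (988 : ℝ) • Matrix.diagonal ![1, 1, 2, 3, 3, 4, 5], by norm_num, ?_, ?_, ?_,
    1 / 988, by norm_num, ?_⟩
  · exact (Matrix.isSymm_diagonal _).smul _
  · rw [hact]
    intro X Y
    rw [Matrix.smul_mulVec, Matrix.smul_mulVec, Matrix.smul_mulVec]
    funext k
    fin_cases k <;> simp [lawP, Matrix.mulVec_diagonal] <;> ring
  · rw [hact, momentMap_lawP hp hq hr]
  · rw [smul_smul]
    norm_num
    rw [Matrix.charpoly_diagonal]
    simp [Fin.prod_univ_succ]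
    ring
end
end

section
/- For every λ ∈ ℝ, the diagonal map φ = (5/17) diag(1,2,2,3,3,4,5) is a pre-Einstein derivation of g_{1.3(i_λ)}: φ is a derivation of g_{1.3(i_λ)}, φ is diagonal (hence semisimple with real eigenvalues), and tr(φ ∘ ψ) = tr(ψ) for every derivation ψ of g_{1.3(i_λ)}. -/
open Matrix BigOperators Polynomial

noncomputable section

/-- structure constants of `g_{1.3(i_λ)}`. -/
def c13 (lam : ℝ) : Fin 7 → Fin 7 → Fin 7 → ℝ := fun i j =>
  if i = 0 ∧ j = 1 then Pi.single 3 1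
  else if i = 0 ∧ j = 2 then Pi.single 4 1
  else if i = 0 ∧ j = 3 then Pi.single 5 1
  else if i = 0 ∧ j = 5 then Pi.single 6 1
  else if i = 1 ∧ j = 2 then Pi.single 5 1
  else if i = 1 ∧ j = 3 then Pi.single 6 lam
  else if i = 1 ∧ j = 4 then Pi.single 6 1
  else if i = 2 ∧ j = 4 then Pi.single 6 1
  else 0

/-- the Lie algebra law of `g_{1.3(i_λ)}`. -/
def law13 (lam : ℝ) : Law 7 := mkLaw (c13 lam)

theorem law13_explicit (lam : ℝ) (X Y : Fin 7 → ℝ) :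
    law13 lam X Y = ![0, 0, 0, X 0 * Y 1 - X 1 * Y 0, X 0 * Y 2 - X 2 * Y 0,
      (X 0 * Y 3 - X 3 * Y 0) + (X 1 * Y 2 - X 2 * Y 1),
      (X 0 * Y 5 - X 5 * Y 0) + lam * (X 1 * Y 3 - X 3 * Y 1) + (X 1 * Y 4 - X 4 * Y 1)
        + (X 2 * Y 4 - X 4 * Y 2)] := by
  funext k
  fin_cases k <;> simp [law13, mkLaw, c13, Fin.sum_univ_seven, Pi.single_apply] <;> ring

/-- `φ = (5/17) diag(1,2,2,3,3,4,5)` is a pre-Einstein derivation of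
`g_{1.3(i_λ)}` for every `λ`. -/
theorem stmt_7 (lam : ℝ) :
    IsDerivation (law13 lam)
      ((5/17 : ℝ) • Matrix.diagonal (![1, 2, 2, 3, 3, 4, 5] : Fin 7 → ℝ)) ∧
    (∀ ψ : Matrix (Fin 7) (Fin 7) ℝ, IsDerivation (law13 lam) ψ →
      Matrix.trace
        (((5/17 : ℝ) • Matrix.diagonal (![1, 2, 2, 3, 3, 4, 5] : Fin 7 → ℝ)) * ψ) =
        Matrix.trace ψ) := by
  constructor
  · intro X Y
    rw [law13_explicit, law13_explicit, law13_explicit]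
    funext k
    fin_cases k <;> simp [Matrix.smul_mulVec, Matrix.mulVec_diagonal] <;> ring
  · intro ψ h
    have key : ∀ i j k : Fin 7, _ := fun i j k =>
      congrFun (h (Pi.single i 1) (Pi.single j 1)) k
    simp only [law13_explicit] at key
    have h1 := key 0 1 3
    have h2 := key 0 2 4
    have h3 := key 0 3 5
    have h4 := key 0 5 6
    have h5 := key 1 2 5
    have h6 := key 2 4 6
    have h7 := key 0 4 5
    have h8 := key 0 2 3
    have h9 := key 1 4 6
    have h10 := key 0 1 4
    simp [Matrix.mulVec, dotProduct, Fin.sum_univ_seven, Pi.single_apply] at h1 h2 h3 h4 h5 h6 h7 h8 h9 h10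
    simp [Matrix.trace, Matrix.diag, Fin.sum_univ_seven]
    linarith
end
end

section
/- For every λ ∈ ℝ with λ ≠ 0, the 7-dimensional nilpotent Lie algebra g_{1.3(i_λ)} is an Einstein nilradical. -/
open Matrix BigOperators Polynomial

noncomputable section

/-- explicit graded law -/
def nuLaw (p q d s t b1 b2 b3 b4 : ℝ) : Law 7 := fun X Y =>
  ![0, 0, 0, p * (X 0 * Y 1 - X 1 * Y 0),
    q * (X 0 * Y 1 - X 1 * Y 0) + d * (X 0 * Y 2 - X 2 * Y 0),
    2 * (X 0 * Y 3 - X 3 * Y 0) + s * (X 1 * Y 2 - X 2 * Y 1),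
    t * (X 0 * Y 5 - X 5 * Y 0) + b1 * (X 1 * Y 3 - X 3 * Y 1) + b2 * (X 1 * Y 4 - X 4 * Y 1)
      + b3 * (X 2 * Y 3 - X 3 * Y 2) + b4 * (X 2 * Y 4 - X 4 * Y 2)]

theorem law13_eq (lam : ℝ) (X Y : Fin 7 → ℝ) : law13 lam X Y =
  ![0, 0, 0, (X 0 * Y 1 - X 1 * Y 0), (X 0 * Y 2 - X 2 * Y 0),
    (X 0 * Y 3 - X 3 * Y 0) + (X 1 * Y 2 - X 2 * Y 1),
    (X 0 * Y 5 - X 5 * Y 0) + lam * (X 1 * Y 3 - X 3 * Y 1) + (X 1 * Y 4 - X 4 * Y 1)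
      + (X 2 * Y 4 - X 4 * Y 2)] := by
  funext k
  fin_cases k <;> simp [law13, mkLaw, c13, Fin.sum_univ_seven] <;> ring

theorem act_eq {n : ℕ} (g : GL (Fin n) ℝ) (μ ν : Law n)
    (h : ∀ X Y, (g : Matrix (Fin n) (Fin n) ℝ).mulVec (μ X Y) =
      ν ((g : Matrix (Fin n) (Fin n) ℝ).mulVec X) ((g : Matrix (Fin n) (Fin n) ℝ).mulVec Y)) :
    act g μ = ν := by
  funext X Y
  have e : ∀ X : Fin n → ℝ, (g : Matrix (Fin n) (Fin n) ℝ).mulVec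
      (((g⁻¹ : GL (Fin n) ℝ) : Matrix (Fin n) (Fin n) ℝ).mulVec X) = X := by
    intro X
    rw [Matrix.mulVec_mulVec, ← Units.val_mul, mul_inv_cancel, Units.val_one, Matrix.one_mulVec]
  rw [act, h, e, e]

def gMat (P1 P2 Q R1 R2 R3 z w : ℝ) : Matrix (Fin 7) (Fin 7) ℝ :=
  !![1, 0, 0, 0, 0, 0, 0;
     0, P1, 0, 0, 0, 0, 0;
     0, P2, Q, 0, 0, 0, 0;
     0, 0, 0, R1, 0, 0, 0;
     0, 0, 0, R2, R3, 0, 0;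
     0, 0, 0, 0, 0, z, 0;
     0, 0, 0, 0, 0, 0, w]

theorem gMat_det (P1 P2 Q R1 R2 R3 z w : ℝ) :
    (gMat P1 P2 Q R1 R2 R3 z w).det = P1 * Q * R1 * R3 * z * w := by
  rw [Matrix.det_of_isLowerTriangular]
  · simp [gMat, Fin.prod_univ_succ]; ring
  · intro i j hij
    fin_cases i <;> fin_cases j <;> first | rfl | (exfalso; revert hij; decide)

theorem gMat_mulVec (P1 P2 Q R1 R2 R3 z w : ℝ) (X : Fin 7 → ℝ) :
    (gMat P1 P2 Q R1 R2 R3 z w).mulVec X =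
      ![X 0, P1 * X 1, P2 * X 1 + Q * X 2, R1 * X 3, R2 * X 3 + R3 * X 4, z * X 5, w * X 6] := by
  funext k
  fin_cases k <;> simp [gMat, Matrix.mulVec, dotProduct, Fin.sum_univ_succ]

set_option maxHeartbeats 4000000 in
theorem core (lam p q d s t b1 b2 b3 b4 : ℝ)
    (hp : p ≠ 0) (hd : d ≠ 0) (hs : s ≠ 0) (ht : t ≠ 0) (hb : b4 ≠ 0)
    (h1 : p^2+q^2+d^2+4+t^2=12) (h7 : t^2+b1^2+b2^2+b3^2+b4^2=8) (h6 : 4+s^2-t^2=3)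
    (h2 : p^2+q^2+s^2+b1^2+b2^2=7) (h3 : d^2+s^2+b3^2+b4^2=7) (h23 : q*d+b1*b3+b2*b4=0)
    (h4 : p^2-4-b1^2-b3^2=-2) (h5 : q^2+d^2-b2^2-b4^2=-2) (h45 : p*q-b1*b2-b3*b4=0)
    (hj : b2*d-b3*p-b4*q=s*t) (hl : lam*(s*t)^2 = p*d*(b1*b4-b2*b3)) :
    IsEinsteinNilradical (law13 lam) := by
  obtain ⟨Q, hQ⟩ : ∃ Q, Q = 2*p/s := ⟨_, rfl⟩
  obtain ⟨P1, hP1⟩ : ∃ P1, P1 = Q*b4*d/(s*t) := ⟨_, rfl⟩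
  obtain ⟨P2, hP2⟩ : ∃ P2, P2 = -Q*(b3*p+b4*q)/(s*t) := ⟨_, rfl⟩
  have hst : s * t ≠ 0 := mul_ne_zero hs ht
  have hQ0 : Q ≠ 0 := by rw [hQ]; positivity
  have hP10 : P1 ≠ 0 := by rw [hP1]; positivity
  have eQ : Q * s = 2 * p := by rw [hQ]; field_simp
  have eP1 : P1 * (s*t) = Q*b4*d := by rw [hP1]; field_simp
  have eP2 : P2 * (s*t) = -Q*(b3*p+b4*q) := by rw [hP2]; field_simp
  have hdet : (gMat P1 P2 Q (P1*p) (P1*q+P2*d) (Q*d) (s*P1*Q) (s*P1*Q*t)).det ≠ 0 := by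
    rw [gMat_det]; positivity
  -- consequences
  have k1 : P1 * (b3*p+b4*q) + P2 * (b4*d) = 0 := by
    apply mul_right_cancel₀ hst
    linear_combination (b3*p+b4*q)*eP1 + b4*d*eP2
  have k2 : P1 * (b2*d) + P2*(b4*d) = P1*(s*t) := by
    linear_combination k1 + P1*hj
  have k3 : P1 * (P1*(b1*p+b2*q) + P2*(b2*d)) = lam * (s*t) * P1 * Q := by
    apply mul_right_cancel₀ hst
    apply mul_left_cancel₀ (mul_ne_zero hb hd)
    linear_combination (P1*(b1*p+b2*q)*b4*d) * eP1 + P1*b2*d*b4*d*eP2 - P1*Q*b4*d*hl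
  have hact : act (Matrix.GeneralLinearGroup.mkOfDetNeZero _ hdet) (law13 lam)
      = nuLaw p q d s t b1 b2 b3 b4 := by
    apply act_eq
    intro X Y
    change (gMat P1 P2 Q (P1*p) (P1*q+P2*d) (Q*d) (s*P1*Q) (s*P1*Q*t)).mulVec _ =
      nuLaw p q d s t b1 b2 b3 b4
       ((gMat P1 P2 Q (P1*p) (P1*q+P2*d) (Q*d) (s*P1*Q) (s*P1*Q*t)).mulVec X)
       ((gMat P1 P2 Q (P1*p) (P1*q+P2*d) (Q*d) (s*P1*Q) (s*P1*Q*t)).mulVec Y)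
    rw [gMat_mulVec, gMat_mulVec, gMat_mulVec, law13_eq]
    funext k
    fin_cases k
    · simp [nuLaw]
    · simp [nuLaw]
    · simp [nuLaw]
    · simp [nuLaw]; ring
    · simp [nuLaw]; ring
    · simp [nuLaw]; linear_combination P1 * (X 0 * Y 3 - X 3 * Y 0) * eQ
    · simp [nuLaw]
      linear_combination -(X 1 * Y 3 - X 3 * Y 1) * (k3 + P2 * k1)
        - (X 1 * Y 4 - X 4 * Y 1) * Q * k2 - (X 2 * Y 3 - X 3 * Y 2) * Q * k1
        + (X 2 * Y 4 - X 4 * Y 2) * Q * eP1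
  refine ⟨Matrix.GeneralLinearGroup.mkOfDetNeZero _ hdet, -34, Matrix.diagonal ![10,20,20,30,30,40,50], by norm_num, ?_, ?_, ?_⟩
  · exact Matrix.isSymm_diagonal _
  · rw [hact]
    intro X Y
    funext k
    fin_cases k <;> simp [nuLaw, Matrix.mulVec_diagonal] <;> ring
  · rw [hact]
    ext k l
    fin_cases k <;> fin_cases l <;>
      simp [momentMap, nuLaw, bVec, Fin.sum_univ_seven, Pi.single_apply] <;> linarith

theorem case_neg (lam : ℝ) (h : lam < 0) : IsEinsteinNilradical (law13 lam) := by
  obtain ⟨T, ⟨hT1, hT4⟩, hT⟩ : ∃ T ∈ Set.Ioo (1:ℝ) 4, 4*(-lam)*T*(T-1) - 15*(4-T) = 0 := by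
    apply intermediate_value_Ioo (f := fun T : ℝ => 4*(-lam)*T*(T-1) - 15*(4-T)) (by norm_num)
      (by fun_prop)
    constructor <;> norm_num <;> linarith
  have ht := Real.sqrt_pos.2 (show 0 < T by linarith)
  have hs := Real.sqrt_pos.2 (show 0 < T - 1 by linarith)
  have hp := Real.sqrt_pos.2 (show 0 < 5 - T/2 by linarith)
  have hD := Real.sqrt_pos.2 (show 0 < (60-15*T)/4 by linarith)
  have et := Real.sq_sqrt (show 0 ≤ T by linarith)
  have es := Real.sq_sqrt (show 0 ≤ T - 1 by linarith)
  have ep := Real.sq_sqrt (show 0 ≤ 5 - T/2 by linarith)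
  have eD := Real.sq_sqrt (show 0 ≤ (60-15*T)/4 by linarith)
  generalize √T = t at *
  generalize √(T-1) = s at *
  generalize √(5-T/2) = p at *
  generalize √((60-15*T)/4) = D at *
  obtain ⟨q, hq⟩ : ∃ q, q = (s*t/2)/p := ⟨_, rfl⟩
  obtain ⟨d, hd⟩ : ∃ d, d = D/p := ⟨_, rfl⟩
  have eq : p*q = s*t/2 := by rw [hq]; field_simp
  have ed : p*d = D := by rw [hd]; field_simp
  have hd0 : d ≠ 0 := by rw [hd]; positivity
  have est : (s*t)^2 = (T-1)*T := by rw [mul_pow, es, et]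
  have eqd : q^2+d^2 = 3 - T/2 := by
    apply mul_left_cancel₀ (pow_ne_zero 2 hp.ne')
    linear_combination (p*q+s*t/2)*eq + (p*d+D)*ed + eD + est/4 - (3-T/2)*ep
  apply core lam p q d s t d 0 (-q) (-p) hp.ne' hd0 hs.ne' ht.ne' (neg_ne_zero.2 hp.ne')
  · linear_combination ep + eqd + et
  · linear_combination ep + eqd + et
  · linear_combination es - et
  · linear_combination ep + eqd + es
  · linear_combination ep + eqd + es
  · ring
  · linear_combination ep - eqd
  · linear_combination eqd - ep
  · ring
  · linear_combination 2 * eq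
  · linear_combination lam * est + (p*d+D)*ed + eD - hT/4

theorem case_pos (lam : ℝ) (h : 0 < lam) : IsEinsteinNilradical (law13 lam) := by
  obtain ⟨T, ⟨hT1, hT4⟩, hT⟩ : ∃ T ∈ Set.Ioo (1:ℝ) 4,
      4*lam*T*(T-1)*(64-15*T) - 15*(4-T)*(8-T)^2 = 0 := by
    apply intermediate_value_Ioo
      (f := fun T : ℝ => 4*lam*T*(T-1)*(64-15*T) - 15*(4-T)*(8-T)^2) (by norm_num)
      (by fun_prop)
    constructor <;> norm_num <;> linarith
  have hr : 0 < 8 - T := by linarith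
  have hW : 0 < 64 - 15*T := by linarith
  have hDD : 0 < (8-T)^2*(60-15*T)/4/(64-15*T) := by
    have : 0 < 60 - 15*T := by linarith
    positivity
  have ht := Real.sqrt_pos.2 (show 0 < T by linarith)
  have hs := Real.sqrt_pos.2 (show 0 < T - 1 by linarith)
  have hp := Real.sqrt_pos.2 (show 0 < 5 - T/2 by linarith)
  have hw := Real.sqrt_pos.2 hW
  have hD := Real.sqrt_pos.2 hDD
  have et := Real.sq_sqrt (show 0 ≤ T by linarith)
  have es := Real.sq_sqrt (show 0 ≤ T - 1 by linarith)
  have ep := Real.sq_sqrt (show 0 ≤ 5 - T/2 by linarith)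
  have ew := Real.sq_sqrt hW.le
  have eD := Real.sq_sqrt hDD.le
  generalize √T = t at *
  generalize √(T-1) = s at *
  generalize √(5-T/2) = p at *
  generalize √(64-15*T) = w at *
  generalize √((8-T)^2*(60-15*T)/4/(64-15*T)) = D at *
  have eD' : D^2 * (64-15*T) = (8-T)^2*(60-15*T)/4 := by rw [eD]; exact div_mul_cancel₀ _ hW.ne'
  obtain ⟨y, hy⟩ : ∃ y, y = -(s*t)/w := ⟨_, rfl⟩
  obtain ⟨f, hf⟩ : ∃ f, f = w/(8-T) := ⟨_, rfl⟩
  obtain ⟨q, hq⟩ : ∃ q, q = y/p := ⟨_, rfl⟩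
  obtain ⟨d, hd⟩ : ∃ d, d = D/p := ⟨_, rfl⟩
  have eq : p*q = y := by rw [hq]; field_simp
  have ed : p*d = D := by rw [hd]; field_simp
  have ey : y*w = -(s*t) := by rw [hy]; field_simp
  have ef : f*(8-T) = w := by rw [hf]; field_simp
  have hf0 : 0 < f := by rw [hf]; positivity
  have hd0 : d ≠ 0 := by rw [hd]; positivity
  have est : (s*t)^2 = (T-1)*T := by rw [mul_pow, es, et]
  have ey2 : y^2*(64-15*T) = (T-1)*T := by
    linear_combination (y*w-s*t)*ey + est - y^2*ew
  have ef2 : f^2*(1+y^2) = 1 := by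
    apply mul_left_cancel₀ (pow_ne_zero 2 hr.ne')
    linear_combination (1+y^2)*(f*(8-T)+w)*ef + (1+y^2)*ew + ey2
  have eDy : D^2 = (8-T)^2/4 - 1 - y^2 := by
    apply mul_right_cancel₀ hW.ne'
    linear_combination eD' + ey2
  have eqd : q^2+d^2 = 3 - T/2 := by
    apply mul_left_cancel₀ (pow_ne_zero 2 hp.ne')
    linear_combination (p*q+y)*eq + (p*d+D)*ed + eDy - (3-T/2)*ep
  have hb : f*(q*y+p) ≠ 0 := by
    have : q*y = y^2/p := by rw [hq]; ring
    rw [this]; positivity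
  apply core lam p q d s t (f*d) (-f*d*y) (f*(-q+p*y)) (f*(q*y+p)) hp.ne' hd0 hs.ne' ht.ne' hb
  · linear_combination ep + eqd + et
  · linear_combination ep + eqd + et + (d^2+p^2+q^2)*ef2
  · linear_combination es - et
  · linear_combination ep + eqd + es + d^2*ef2
  · linear_combination ep + eqd + es + (p^2+q^2)*ef2
  · linear_combination -q*d*ef2
  · linear_combination ep - f^2*eqd + 2*f^2*y*eq - f^2*y^2*ep - (3-T/2)*ef2
  · linear_combination eqd - f^2*y^2*eqd - 2*f^2*y*eq - f^2*ep - (5-T/2)*ef2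
  · linear_combination eq + f^2*y*eqd + f^2*(1-y^2)*eq - f^2*y*ep - y*ef2
  · linear_combination -f*y*(ep+eqd) - y*ef - ey
  · have : p*d*(f*d*(f*(q*y+p))-(-f*d*y)*(f*(-q+p*y))) = D^2 := by
      linear_combination p^2*d^2*ef2 + (p*d+D)*ed
    rw [this, est]
    apply mul_right_cancel₀ hW.ne'
    linear_combination hT/4 - eD'

/-- for every `λ ≠ 0`, `g_{1.3(i_λ)}` is an Einstein nilradical. -/
theorem stmt_8 (lam : ℝ) (hlam : lam ≠ 0) :
    IsEinsteinNilradical (law13 lam) := by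
  rcases lt_or_gt_of_ne hlam with h | h
  · exact case_neg lam h
  · exact case_pos lam h
end
end

section
/- The diagonal maps D_1 = diag(1,0,0,0,1,1,1) and D_2 = diag(0,1,1,2,1,1,2) are derivations of g_{2.2}, and φ = (1/2)(D_1 + D_2) = (1/2) diag(1,1,1,2,2,2,3) is a pre-Einstein derivation of g_{2.2}: φ is a diagonal derivation with tr(φ ∘ ψ) = tr(ψ) for every derivation ψ of g_{2.2}. -/
open Matrix BigOperators Polynomial

noncomputable section

/-- structure constants of `g_{2.2}`. -/
def c22 : Fin 7 → Fin 7 → Fin 7 → ℝ := fun i j =>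
  if i = 0 ∧ j = 1 then Pi.single 4 1
  else if i = 0 ∧ j = 2 then Pi.single 5 1
  else if i = 0 ∧ j = 3 then Pi.single 6 2
  else if i = 1 ∧ j = 2 then Pi.single 3 1
  else if i = 1 ∧ j = 5 then Pi.single 6 1
  else if i = 2 ∧ j = 4 then Pi.single 6 (-1)
  else if i = 2 ∧ j = 5 then Pi.single 6 1
  else 0

/-- the Lie algebra law of `g_{2.2}`. -/
def law22 : Law 7 := mkLaw c22

lemma law22_apply (X Y : Fin 7 → ℝ) : law22 X Y =
    ![0, 0, 0, X 1 * Y 2 - X 2 * Y 1, X 0 * Y 1 - X 1 * Y 0, X 0 * Y 2 - X 2 * Y 0,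
      2 * (X 0 * Y 3 - X 3 * Y 0) + (X 1 * Y 5 - X 5 * Y 1) - (X 2 * Y 4 - X 4 * Y 2)
        + (X 2 * Y 5 - X 5 * Y 2)] := by
  funext k
  fin_cases k <;> simp [law22, mkLaw, c22, Fin.sum_univ_succ, Pi.single_apply] <;> ring

lemma diag_der (d : Fin 7 → ℝ) (h3 : d 3 = d 1 + d 2) (h4 : d 4 = d 0 + d 1)
    (h5 : d 5 = d 0 + d 2) (h6 : d 6 = d 0 + d 3) (h7 : d 6 = d 1 + d 5)
    (h8 : d 6 = d 2 + d 4) (h9 : d 6 = d 2 + d 5) : IsDerivation law22 (Matrix.diagonal d) := by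
  intro X Y
  rw [law22_apply, law22_apply, law22_apply]
  funext k
  rw [Matrix.mulVec_diagonal]
  fin_cases k <;> simp [Matrix.mulVec_diagonal]
  · rw [h3]; ring
  · rw [h4]; ring
  · rw [h5]; ring
  · linear_combination 2 * (X 0 * Y 3 - X 3 * Y 0) * h6 + (X 1 * Y 5 - X 5 * Y 1) * h7
      - (X 2 * Y 4 - X 4 * Y 2) * h8 + (X 2 * Y 5 - X 5 * Y 2) * h9

/-- `D₁, D₂` are derivations of `g_{2.2}` and
`φ = (1/2)(D₁+D₂) = (1/2)diag(1,1,1,2,2,2,3)` is a pre-Einstein derivation. -/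
theorem stmt_9 :
    IsDerivation law22 (Matrix.diagonal (![1, 0, 0, 0, 1, 1, 1] : Fin 7 → ℝ)) ∧
    IsDerivation law22 (Matrix.diagonal (![0, 1, 1, 2, 1, 1, 2] : Fin 7 → ℝ)) ∧
    (1/2 : ℝ) • (Matrix.diagonal (![1, 0, 0, 0, 1, 1, 1] : Fin 7 → ℝ) +
        Matrix.diagonal (![0, 1, 1, 2, 1, 1, 2] : Fin 7 → ℝ)) =
      (1/2 : ℝ) • Matrix.diagonal (![1, 1, 1, 2, 2, 2, 3] : Fin 7 → ℝ) ∧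
    IsDerivation law22
      ((1/2 : ℝ) • Matrix.diagonal (![1, 1, 1, 2, 2, 2, 3] : Fin 7 → ℝ)) ∧
    (∀ ψ : Matrix (Fin 7) (Fin 7) ℝ, IsDerivation law22 ψ →
      Matrix.trace
        (((1/2 : ℝ) • Matrix.diagonal (![1, 1, 1, 2, 2, 2, 3] : Fin 7 → ℝ)) * ψ) =
        Matrix.trace ψ) := by
  refine ⟨?_, ?_, ?_, ?_, ?_⟩
  · apply diag_der <;> simp
  · apply diag_der <;> simp <;> norm_num
  · rw [Matrix.diagonal_add]
    congr 2
    funext k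
    fin_cases k <;> simp <;> norm_num
  · rw [← Matrix.diagonal_smul]
    apply diag_der <;> simp <;> norm_num
  · intro ψ h
    have h1 := congrFun (h (Pi.single 1 1) (Pi.single 2 1)) 3
    have h2 := congrFun (h (Pi.single 0 1) (Pi.single 3 1)) 6
    simp only [law22_apply, Pi.add_apply] at h1 h2
    simp [Matrix.mulVec, dotProduct, Fin.sum_univ_succ] at h1 h2
    rw [← Matrix.diagonal_smul]
    simp only [Matrix.trace, Matrix.diag, Matrix.diagonal_mul]
    simp [Fin.sum_univ_succ]
    linarith
end
end

section
/- For λ = 0 and for λ = 1, the 7-dimensional nilpotent Lie algebra g_{3.1(i_λ)} is not an Einstein nilradical. -/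
open Matrix BigOperators Polynomial

noncomputable section

/-- structure constants of `g_{3.1(i_λ)}`. -/
def c31 (lam : ℝ) : Fin 7 → Fin 7 → Fin 7 → ℝ := fun i j =>
  if i = 0 ∧ j = 1 then Pi.single 3 1
  else if i = 0 ∧ j = 2 then Pi.single 4 1
  else if i = 0 ∧ j = 5 then Pi.single 6 1
  else if i = 1 ∧ j = 2 then Pi.single 5 1
  else if i = 1 ∧ j = 4 then Pi.single 6 lam
  else if i = 2 ∧ j = 3 then Pi.single 6 (lam - 1)
  else 0

/-- the Lie algebra law of `g_{3.1(i_λ)}`. -/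
def law31 (lam : ℝ) : Law 7 := mkLaw (c31 lam)

theorem law31_apply (lam : ℝ) (X Y : Fin 7 → ℝ) : law31 lam X Y =
    ![0, 0, 0, X 0 * Y 1 - X 1 * Y 0, X 0 * Y 2 - X 2 * Y 0, X 1 * Y 2 - X 2 * Y 1,
      X 0 * Y 5 - X 5 * Y 0 + lam * (X 1 * Y 4 - X 4 * Y 1)
        + (lam - 1) * (X 2 * Y 3 - X 3 * Y 2)] := by
  funext k
  fin_cases k <;> simp [law31, mkLaw, c31, Fin.sum_univ_seven] <;> ring

theorem law31_bilin (lam : ℝ) : IsBilin (law31 lam) := by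
  constructor
  · intro X
    constructor
    · intro Y Z
      simp only [law31_apply]
      funext k
      fin_cases k <;> simp <;> ring
    · intro a Y
      simp only [law31_apply]
      funext k
      fin_cases k <;> simp <;> ring
  · intro X
    constructor
    · intro Y Z
      simp only [law31_apply]
      funext k
      fin_cases k <;> simp <;> ring
    · intro a Y
      simp only [law31_apply]
      funext k
      fin_cases k <;> simp <;> ring

theorem law31_skew (lam : ℝ) : IsSkew (law31 lam) := by
  intro X Y
  simp only [law31_apply]
  funext k
  fin_cases k <;> simp <;> ring

theorem vec_sum {n : ℕ} (X : Fin n → ℝ) : X = ∑ i, X i • bVec i := by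
  funext k
  simp [bVec, Finset.sum_apply, Pi.single_apply]

theorem bilin_left {n : ℕ} {ν : Law n} (hb : IsBilin ν) (X Y : Fin n → ℝ) :
    ν X Y = ∑ i, X i • ν (bVec i) Y := by
  have h := map_sum ((hb.2 Y).mk' _) (fun i => X i • bVec i) Finset.univ
  rw [← vec_sum] at h
  simpa [(hb.2 Y).map_smul] using h

theorem bilin_right {n : ℕ} {ν : Law n} (hb : IsBilin ν) (X Y : Fin n → ℝ) :
    ν X Y = ∑ i, Y i • ν X (bVec i) := by
  have h := map_sum ((hb.1 X).mk' _) (fun i => Y i • bVec i) Finset.univ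
  rw [← vec_sum] at h
  simpa [(hb.1 X).map_smul] using h

theorem act_bilin {n : ℕ} {μ : Law n} (g : GL (Fin n) ℝ) (hb : IsBilin μ) : IsBilin (act g μ) := by
  constructor
  · intro X
    constructor
    · intro Y Z
      simp only [act, mulVec_add, (hb.1 _).map_add]
    · intro a Y
      simp only [act, mulVec_smul, (hb.1 _).map_smul]
  · intro X
    constructor
    · intro Y Z
      simp only [act, mulVec_add, (hb.2 _).map_add]
    · intro a Y
      simp only [act, mulVec_smul, (hb.2 _).map_smul]

theorem act_skew {n : ℕ} {μ : Law n} (g : GL (Fin n) ℝ) (hs : IsSkew μ) : IsSkew (act g μ) := by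
  intro X Y
  simp only [act]
  rw [hs, mulVec_neg]

theorem trace_moment {n : ℕ} {ν : Law n} (hb : IsBilin ν) (hs : IsSkew ν)
    {D : Matrix (Fin n) (Fin n) ℝ} (hD : IsDerivation ν D) : (momentMap ν * D).trace = 0 := by
  set N : Fin n → Fin n → Fin n → ℝ := fun i j k => ν (bVec i) (bVec j) k with hN
  have hcol : ∀ i, D.mulVec (bVec i) = fun l => D l i := by
    intro i
    funext l
    simp [bVec]
  have hd : ∀ i j k, ∑ l, D k l * N i j l = ∑ l, D l i * N l j k + ∑ l, D l j * N i l k := by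
    intro i j k
    have h := congrFun (hD (bVec i) (bVec j)) k
    rw [bilin_left hb (D.mulVec (bVec i)), bilin_right hb _ (D.mulVec (bVec j)), hcol, hcol] at h
    simpa [mulVec, dotProduct, Finset.sum_apply] using h
  have hsk : ∀ i j k, N i j k = - N j i k := fun i j k => congrFun (hs (bVec i) (bVec j)) k
  have key : ∑ i, ∑ j, ∑ k, ∑ l, N i j k * D k l * N i j l
      = 2 * ∑ i, ∑ j, ∑ k, ∑ l, N i j k * D l i * N l j k := by
    have e1 : ∑ i, ∑ j, ∑ k, ∑ l, N i j k * D k l * N i j l =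
        ∑ i, ∑ j, ∑ k, ∑ l, N i j k * D l i * N l j k
        + ∑ i, ∑ j, ∑ k, ∑ l, N i j k * D l j * N i l k := by
      simp only [← Finset.sum_add_distrib]
      refine Finset.sum_congr rfl fun i _ => Finset.sum_congr rfl fun j _ =>
        Finset.sum_congr rfl fun k _ => ?_
      have := congrArg (fun t => N i j k * t) (hd i j k)
      simp only [mul_add, Finset.mul_sum] at this
      simpa [mul_assoc, Finset.sum_add_distrib] using this
    have e2 : ∑ i, ∑ j, ∑ k, ∑ l, N i j k * D l j * N i l k =
        ∑ i, ∑ j, ∑ k, ∑ l, N i j k * D l i * N l j k := by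
      rw [Finset.sum_comm]
      refine Finset.sum_congr rfl fun i _ => Finset.sum_congr rfl fun j _ =>
        Finset.sum_congr rfl fun k _ => Finset.sum_congr rfl fun l _ => ?_
      rw [hsk j i k, hsk j l k]
      ring
    rw [e1, e2]; ring
  have s1 : ∑ k, ∑ l, (∑ i, ∑ j, N k i j * N l i j) * D l k
      = ∑ i, ∑ j, ∑ k, ∑ l, N i j k * D l i * N l j k := by
    refine Finset.sum_congr rfl fun a _ => ?_
    simp only [Finset.sum_mul]
    rw [Finset.sum_comm]
    refine Finset.sum_congr rfl fun b _ => ?_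
    rw [Finset.sum_comm]
    refine Finset.sum_congr rfl fun c _ => Finset.sum_congr rfl fun d _ => ?_
    ring
  have s2 : ∑ k, ∑ l, (∑ i, ∑ j, N i j k * N i j l) * D l k
      = ∑ i, ∑ j, ∑ k, ∑ l, N i j k * D k l * N i j l := by
    calc _ = ∑ k, ∑ l, ∑ i, ∑ j, N i j k * N i j l * D l k := by simp only [Finset.sum_mul]
      _ = ∑ l, ∑ k, ∑ i, ∑ j, N i j k * N i j l * D l k := Finset.sum_comm
      _ = ∑ l, ∑ i, ∑ k, ∑ j, N i j k * N i j l * D l k :=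
          Finset.sum_congr rfl fun _ _ => Finset.sum_comm
      _ = ∑ i, ∑ l, ∑ k, ∑ j, N i j k * N i j l * D l k := Finset.sum_comm
      _ = ∑ i, ∑ l, ∑ j, ∑ k, N i j k * N i j l * D l k :=
          Finset.sum_congr rfl fun _ _ => Finset.sum_congr rfl fun _ _ => Finset.sum_comm
      _ = ∑ i, ∑ j, ∑ l, ∑ k, N i j k * N i j l * D l k :=
          Finset.sum_congr rfl fun _ _ => Finset.sum_comm
      _ = _ := by
          refine Finset.sum_congr rfl fun i _ => Finset.sum_congr rfl fun j _ =>
            Finset.sum_congr rfl fun k _ => Finset.sum_congr rfl fun l _ => ?_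
          ring
  have : (momentMap ν * D).trace =
      -2 * ∑ k, ∑ l, (∑ i, ∑ j, N k i j * N l i j) * D l k
      + ∑ k, ∑ l, (∑ i, ∑ j, N i j k * N i j l) * D l k := by
    simp only [trace, diag, mul_apply, momentMap, of_apply, Finset.mul_sum (s := Finset.univ)
      (f := fun k => ∑ l, (∑ i, ∑ j, N k i j * N l i j) * D l k),
      Finset.mul_sum (s := Finset.univ) (a := (-2 : ℝ)), ← Finset.sum_add_distrib]
    refine Finset.sum_congr rfl fun k _ => Finset.sum_congr rfl fun l _ => ?_
    simp only [hN]
    ring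
  rw [this, s1, s2, key]; ring

theorem moment_central {n : ℕ} {ν : Law n} (hb : IsBilin ν) (v : Fin n → ℝ)
    (hv : ∀ Y, ν v Y = 0) :
    v ⬝ᵥ (momentMap ν).mulVec v = ∑ i, ∑ j, (ν (bVec i) (bVec j) ⬝ᵥ v) ^ 2 := by
  set N : Fin n → Fin n → Fin n → ℝ := fun i j k => ν (bVec i) (bVec j) k with hN
  have hz : ∀ i j, ∑ k, v k * N k i j = 0 := by
    intro i j
    have h := congrFun (hv (bVec i)) j
    rw [bilin_left hb] at h
    simpa [Finset.sum_apply] using h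
  have h1 : ∀ k, (momentMap ν).mulVec v k = ∑ i, ∑ j, N i j k * (N i j ⬝ᵥ v) := by
    intro k
    have a1 : ∑ l, (∑ i, ∑ j, N k i j * N l i j) * v l = 0 := by
      calc _ = ∑ l, ∑ i, ∑ j, N k i j * N l i j * v l := by simp only [Finset.sum_mul]
        _ = ∑ i, ∑ l, ∑ j, N k i j * N l i j * v l := Finset.sum_comm
        _ = ∑ i, ∑ j, ∑ l, N k i j * N l i j * v l :=
          Finset.sum_congr rfl fun _ _ => Finset.sum_comm
        _ = ∑ i, ∑ j, N k i j * ∑ l, v l * N l i j := by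
          simp only [Finset.mul_sum]
          refine Finset.sum_congr rfl fun i _ => Finset.sum_congr rfl fun j _ =>
            Finset.sum_congr rfl fun l _ => ?_
          ring
        _ = 0 := by simp [hz]
    have a2 : ∑ l, (∑ i, ∑ j, N i j k * N i j l) * v l = ∑ i, ∑ j, N i j k * (N i j ⬝ᵥ v) := by
      calc _ = ∑ l, ∑ i, ∑ j, N i j k * N i j l * v l := by simp only [Finset.sum_mul]
        _ = ∑ i, ∑ l, ∑ j, N i j k * N i j l * v l := Finset.sum_comm
        _ = ∑ i, ∑ j, ∑ l, N i j k * N i j l * v l :=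
          Finset.sum_congr rfl fun _ _ => Finset.sum_comm
        _ = _ := by simp only [dotProduct, Finset.mul_sum, mul_assoc]
    have : (momentMap ν).mulVec v k = -2 * ∑ l, (∑ i, ∑ j, N k i j * N l i j) * v l
        + ∑ l, (∑ i, ∑ j, N i j k * N i j l) * v l := by
      simp only [mulVec, dotProduct, momentMap, of_apply,
        Finset.mul_sum (s := Finset.univ) (a := (-2 : ℝ)), ← Finset.sum_add_distrib]
      refine Finset.sum_congr rfl fun l _ => ?_
      simp only [hN]
      ring
    rw [this, a1, a2]; ring
  calc v ⬝ᵥ (momentMap ν).mulVec v = ∑ k, v k * ∑ i, ∑ j, N i j k * (N i j ⬝ᵥ v) := by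
        simp only [dotProduct, h1]
    _ = ∑ k, ∑ i, ∑ j, v k * (N i j k * (N i j ⬝ᵥ v)) := by simp only [Finset.mul_sum]
    _ = ∑ i, ∑ k, ∑ j, v k * (N i j k * (N i j ⬝ᵥ v)) := Finset.sum_comm
    _ = ∑ i, ∑ j, ∑ k, v k * (N i j k * (N i j ⬝ᵥ v)) :=
        Finset.sum_congr rfl fun _ _ => Finset.sum_comm
    _ = _ := by
        refine Finset.sum_congr rfl fun i _ => Finset.sum_congr rfl fun j _ => ?_
        have : ν (bVec i) (bVec j) ⬝ᵥ v = ∑ k, v k * N i j k := by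
          simp only [dotProduct, hN]
          exact Finset.sum_congr rfl fun k _ => mul_comm _ _
        rw [sq]
        nth_rewrite 2 [this]
        rw [Finset.sum_mul]
        refine Finset.sum_congr rfl fun k _ => ?_
        simp only [hN]
        ring

theorem not_einstein {n : ℕ} {μ : Law n} (hb : IsBilin μ) (hs : IsSkew μ)
    (k z a b : Fin n) (hkz : k ≠ z) (hab : μ (bVec a) (bVec b) = bVec k)
    (hk : ∀ Y, μ (bVec k) Y = 0) (hz : ∀ Y, μ (bVec z) Y = 0)
    (H1 : ∀ ψ, IsDerivation μ ψ →
      (∃ q : ℝ, ψ.mulVec (bVec k) = ψ k k • bVec k + q • bVec z) ∧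
      (∃ r : ℝ, ψ.mulVec (bVec z) = r • bVec z))
    (H2 : ∀ ψ c, IsDerivation μ ψ →
      (∀ D, IsDerivation μ D → c * D.trace + (ψ * D).trace = 0) → ψ k k = -c) :
    ¬ IsEinsteinNilradical μ := by
  rintro ⟨g, c, φ, hc, hsym, hder, hm⟩
  have hb' := act_bilin g hb
  have hs' := act_skew g hs
  set G : Matrix (Fin n) (Fin n) ℝ := (g : Matrix (Fin n) (Fin n) ℝ) with hG
  set K : Matrix (Fin n) (Fin n) ℝ := ((g⁻¹ : GL (Fin n) ℝ) : Matrix (Fin n) (Fin n) ℝ) with hK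
  have hGK : G * K = 1 := by rw [hG, hK]; exact Units.mul_inv g
  have hKG : K * G = 1 := by rw [hG, hK]; exact Units.inv_mul g
  have cGK : ∀ X : Fin n → ℝ, G.mulVec (K.mulVec X) = X := by intro X; simp [hGK]
  have cKG : ∀ X : Fin n → ℝ, K.mulVec (G.mulVec X) = X := by intro X; simp [hKG]
  have hact : ∀ X Y, act g μ X Y = G.mulVec (μ (K.mulVec X) (K.mulVec Y)) := fun X Y => rfl
  have hψ : IsDerivation μ (K * φ * G) := by
    intro X Y
    have h := hder (G.mulVec X) (G.mulVec Y)
    simp only [hact, cKG] at h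
    have h2 := congrArg K.mulVec h
    rw [mulVec_add, cKG, cKG] at h2
    simp only [← mulVec_mulVec]
    exact h2
  have htr : ∀ D, IsDerivation μ D → c * D.trace + (K * φ * G * D).trace = 0 := by
    intro D hD
    have hD' : IsDerivation (act g μ) (G * D * K) := by
      intro X Y
      simp only [hact, ← mulVec_mulVec, cKG]
      rw [hD, mulVec_add]
    have h := trace_moment hb' hs' hD'
    rw [hm, add_mul, trace_add, smul_mul_assoc, one_mul, trace_smul] at h
    have t1 : (G * D * K).trace = D.trace := by
      rw [trace_mul_comm, ← mul_assoc, hKG, one_mul]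
    have t2 : (φ * (G * D * K)).trace = (K * φ * G * D).trace := by
      rw [← mul_assoc, trace_mul_comm]
      simp only [mul_assoc]
    rw [t1, t2] at h
    simpa using h
  obtain ⟨⟨q, hq⟩, r, hr⟩ := H1 _ hψ
  rw [H2 _ c hψ htr] at hq
  have f1 : φ.mulVec (G.mulVec (bVec k)) = (-c) • G.mulVec (bVec k) + q • G.mulVec (bVec z) := by
    have := congrArg G.mulVec hq
    simpa only [← mulVec_mulVec, cGK, mulVec_add, mulVec_smul] using this
  have f2 : φ.mulVec (G.mulVec (bVec z)) = r • G.mulVec (bVec z) := by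
    have := congrArg G.mulVec hr
    simpa only [← mulVec_mulVec, cGK, mulVec_add, mulVec_smul] using this
  set w := G.mulVec (bVec z) with hw
  set u := G.mulVec (bVec k) with hu
  have hw0 : w ⬝ᵥ w ≠ 0 := by
    intro h
    have h0 := dotProduct_self_eq_zero.1 h
    have := congrFun (cKG (bVec z)) z
    rw [← hw, h0] at this
    simp [bVec] at this
  set t : ℝ := - (u ⬝ᵥ w) / (w ⬝ᵥ w) with ht
  obtain ⟨v, hv⟩ : ∃ v, v = u + t • w := ⟨_, rfl⟩
  have hvw : w ⬝ᵥ v = 0 := by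
    rw [hv, dotProduct_add, dotProduct_smul, ht, dotProduct_comm w u, smul_eq_mul]
    field_simp
    ring
  have hvK : K.mulVec v = bVec k + t • bVec z := by
    rw [hv, mulVec_add, mulVec_smul, hu, hw, cKG, cKG]
  have hv0 : v ⬝ᵥ v ≠ 0 := by
    intro h
    have h0 := dotProduct_self_eq_zero.1 h
    have := congrFun hvK k
    rw [h0] at this
    simp [bVec, hkz] at this
  have hcen : ∀ Y, act g μ v Y = 0 := by
    intro Y
    rw [hact, hvK, (hb.2 _).map_add, (hb.2 _).map_smul, hk, hz]
    simp
  have hmc := moment_central hb' v hcen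
  have hφv : φ.mulVec v = (-c) • v + (q + t * r + c * t) • w := by
    rw [hv, mulVec_add, mulVec_smul, f1, f2]
    module
  have hz0 : v ⬝ᵥ (momentMap (act g μ)).mulVec v = 0 := by
    rw [hm, add_mulVec, smul_mulVec, one_mulVec, hφv]
    simp only [dotProduct_add, dotProduct_smul, dotProduct_comm v w, hvw, smul_eq_mul]
    ring
  rw [hz0] at hmc
  have hall : ∀ i j, act g μ (bVec i) (bVec j) ⬝ᵥ v = 0 := by
    intro i j
    have h1 := (Finset.sum_eq_zero_iff_of_nonneg (fun i _ =>
      Finset.sum_nonneg fun j _ => sq_nonneg _)).1 hmc.symm i (Finset.mem_univ _)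
    have h2 := (Finset.sum_eq_zero_iff_of_nonneg (fun j _ => sq_nonneg _)).1 h1 j
      (Finset.mem_univ _)
    exact pow_eq_zero_iff (two_ne_zero) |>.1 h2
  have hall' : ∀ X Y, act g μ X Y ⬝ᵥ v = 0 := by
    intro X Y
    rw [bilin_left hb', sum_dotProduct]
    refine Finset.sum_eq_zero fun i _ => ?_
    rw [smul_dotProduct, bilin_right hb', sum_dotProduct]
    simp [smul_dotProduct, hall]
  have huv : u ⬝ᵥ v = 0 := by
    have := hall' (G.mulVec (bVec a)) (G.mulVec (bVec b))
    rwa [hact, cKG, cKG, hab] at this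
  apply hv0
  nth_rewrite 1 [hv]
  rw [add_dotProduct, smul_dotProduct, huv, hvw]
  simp

theorem diag_der_s15 (lam x y z : ℝ) : IsDerivation (law31 lam)
    (Matrix.diagonal ![x, y, z, x + y, x + z, y + z, x + y + z]) := by
  intro X Y
  simp only [law31_apply]
  funext k
  rw [mulVec_diagonal]
  fin_cases k <;> simp [mulVec_diagonal] <;> ring

theorem der_entry {n : ℕ} {μ : Law n} {ψ : Matrix (Fin n) (Fin n) ℝ} (h : IsDerivation μ ψ)
    (i j : Fin n) : ψ.mulVec (μ (bVec i) (bVec j)) =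
      μ (fun l => ψ l i) (bVec j) + μ (bVec i) (fun l => ψ l j) := by
  have hcol : ∀ i, ψ.mulVec (bVec i) = fun l => ψ l i := by
    intro i
    funext l
    simp [bVec]
  rw [h, hcol, hcol]

theorem der_weights {lam : ℝ} {ψ : Matrix (Fin 7) (Fin 7) ℝ} (h : IsDerivation (law31 lam) ψ) :
    ψ 3 3 = ψ 0 0 + ψ 1 1 ∧ ψ 4 4 = ψ 0 0 + ψ 2 2 ∧ ψ 5 5 = ψ 1 1 + ψ 2 2 ∧
    ψ 6 6 = ψ 0 0 + ψ 5 5 := by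
  have h1 := congrFun (der_entry h 0 1) 3
  have h2 := congrFun (der_entry h 0 2) 4
  have h3 := congrFun (der_entry h 1 2) 5
  have h4 := congrFun (der_entry h 0 5) 6
  simp [law31_apply, bVec, mulVec, dotProduct, Fin.sum_univ_succ, Pi.single_apply, Fin.ext_iff] at h1 h2 h3 h4
  refine ⟨?_, ?_, ?_, ?_⟩ <;> assumption

theorem der_trace {lam c : ℝ} {ψ : Matrix (Fin 7) (Fin 7) ℝ} (h : IsDerivation (law31 lam) ψ)
    (ht : ∀ D, IsDerivation (law31 lam) D → c * D.trace + (ψ * D).trace = 0) :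
    ψ 3 3 = -c ∧ ψ 4 4 = -c := by
  obtain ⟨w1, w2, w3, w4⟩ := der_weights h
  have a1 := ht _ (diag_der_s15 lam 1 0 0)
  have a2 := ht _ (diag_der_s15 lam 0 1 0)
  have a3 := ht _ (diag_der_s15 lam 0 0 1)
  simp [trace, Fin.sum_univ_succ, mul_diagonal] at a1 a2 a3
  constructor <;> linarith

theorem der_last {lam : ℝ} {ψ : Matrix (Fin 7) (Fin 7) ℝ} (h : IsDerivation (law31 lam) ψ) :
    ∃ r : ℝ, ψ.mulVec (bVec 6) = r • bVec 6 := by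
  have a := der_entry h 0 5
  have b := der_entry h 1 2
  simp only [law31_apply] at a b
  have a0 := congrFun a 0
  have a1 := congrFun a 1
  have a2 := congrFun a 2
  have a3 := congrFun a 3
  have a4 := congrFun a 4
  have a5 := congrFun a 5
  have b0 := congrFun b 0
  have b1 := congrFun b 1
  have b2 := congrFun b 2
  simp [bVec, mulVec, dotProduct, Fin.sum_univ_succ, Pi.single_apply, Fin.ext_iff] at a0 a1 a2 a3 a4 a5 b0 b1 b2
  refine ⟨ψ 6 6, ?_⟩
  funext k
  fin_cases k <;> simp [bVec, Pi.single_apply, Fin.ext_iff] <;> simp_all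

/-- for `λ = 0` and `λ = 1`, `g_{3.1(i_λ)}` is not an Einstein
nilradical. -/
theorem stmt_15 :
    ¬ IsEinsteinNilradical (law31 0) ∧ ¬ IsEinsteinNilradical (law31 1) := by
  constructor
  · refine not_einstein (law31_bilin 0) (law31_skew 0) 4 6 0 2 (by decide) ?_ ?_ ?_ ?_ ?_
    · rw [law31_apply]; funext k; fin_cases k <;> simp [bVec, Pi.single_apply, Fin.ext_iff]
    · intro Y; rw [law31_apply]; funext k
      fin_cases k <;> simp [bVec, Pi.single_apply, Fin.ext_iff]
    · intro Y; rw [law31_apply]; funext k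
      fin_cases k <;> simp [bVec, Pi.single_apply, Fin.ext_iff]
    · intro ψ h
      refine ⟨⟨ψ 6 4, ?_⟩, der_last h⟩
      have a := der_entry h 0 2
      have b := der_entry h 2 4
      have c := der_entry h 0 4
      simp only [law31_apply] at a b c
      have a0 := congrFun a 0
      have a1 := congrFun a 1
      have a2 := congrFun a 2
      have b6 := congrFun b 6
      have c6 := congrFun c 6
      simp [bVec, mulVec, dotProduct, Fin.sum_univ_succ, Pi.single_apply, Fin.ext_iff] at a0 a1 a2 b6 c6
      funext k
      fin_cases k <;> simp [bVec, Pi.single_apply, Fin.ext_iff] <;> simp_all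
    · intro ψ c h ht
      exact (der_trace h ht).2
  · refine not_einstein (law31_bilin 1) (law31_skew 1) 3 6 0 1 (by decide) ?_ ?_ ?_ ?_ ?_
    · rw [law31_apply]; funext k; fin_cases k <;> simp [bVec, Pi.single_apply, Fin.ext_iff]
    · intro Y; rw [law31_apply]; funext k
      fin_cases k <;> simp [bVec, Pi.single_apply, Fin.ext_iff]
    · intro Y; rw [law31_apply]; funext k
      fin_cases k <;> simp [bVec, Pi.single_apply, Fin.ext_iff]
    · intro ψ h
      refine ⟨⟨ψ 6 3, ?_⟩, der_last h⟩
      have a := der_entry h 0 1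
      have b := der_entry h 1 3
      have c := der_entry h 0 3
      simp only [law31_apply] at a b c
      have a0 := congrFun a 0
      have a1 := congrFun a 1
      have a2 := congrFun a 2
      have b6 := congrFun b 6
      have c6 := congrFun c 6
      simp [bVec, mulVec, dotProduct, Fin.sum_univ_succ, Pi.single_apply, Fin.ext_iff] at a0 a1 a2 b6 c6
      funext k
      fin_cases k <;> simp [bVec, Pi.single_apply, Fin.ext_iff] <;> simp_all
    · intro ψ c h ht
      exact (der_trace h ht).1
end
end
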